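/- arXiv:1908.05456 — 6 statements merged into one kernel-verified Lean document; each statement's English description precedes it below -/
import Mathlib

section
/- Let H be a group and let (h1,h2) and (h1',h2') be generating pairs of H that are Nielsen equivalent. Then there exists g ∈ H such that [h1',h2'] = g⁻¹[h1,h2]g or [h1',h2'] = g⁻¹[h2,h1]g. -/
/-- `η_{h1,h2} : F → H`, the homomorphism from the free group of rank 2 sending the
two generators to `h1` and `h2`. -/
noncomputable def eta {H : Type*} [Group H] (p : H × H) : FreeGroup (Fin 2) →* H :=
  FreeGroup.lift ![p.1, p.2]

/-- Two pairs of elements of `H` are Nielsen equivalent if they lie in the same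
`Aut(F)`-orbit, i.e. `η_{p'} = η_p ∘ α` for some automorphism `α` of the free
group `F` of rank 2. -/
def NielsenEquiv {H : Type*} [Group H] (p p' : H × H) : Prop :=
  ∃ α : FreeGroup (Fin 2) ≃* FreeGroup (Fin 2), eta p' = (eta p).comp α.toMonoidHom

/-- The commutator `[a,b] = a⁻¹b⁻¹ab`. -/
def commE {H : Type*} [Group H] (a b : H) : H := a⁻¹ * b⁻¹ * a * b

/-!
An automorphism of the free group `F` on `x, y` sends `(x, y)` to a generating pair, so it suffices
to show that `[u, v]` is conjugate to `[x, y]` or to its inverse for every generating pair `(u, v)`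
of `F`. Swapping `u` and `v`, inverting `u`, replacing `u` by `u * v`, and conjugating `u` and `v`
simultaneously change `[u, v]` only up to conjugacy and inversion. Among the pairs reachable from
`(u, v)` by such moves choose one of least total length. It is Nielsen reduced: in a reduced product
of its members and their inverses no factor cancels completely, so a product of `n` factors has
length at least `n`. As the pair still generates `F`, the generators `x` and `y`, having length one,
are products of a single factor: they are the members of the pair up to order and inversion.
Conjugations are allowed so that minimality also excludes a member half cancelled from each side.
-/

open FreeGroup

section CommonPrefix

variable {A : Type*} [DecidableEq A]

/-- The length of the longest common prefix of two lists. For reduced words `l` and `m` it is the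
number of cancelling pairs of letters in `l⁻¹ * m`. -/
def commonPrefixLength : List A → List A → ℕ
  | a :: l, b :: m => if a = b then commonPrefixLength l m + 1 else 0
  | _, _ => 0

theorem commonPrefixLength_comm (l m : List A) :
    commonPrefixLength l m = commonPrefixLength m l := by
  induction l generalizing m with
  | nil => cases m <;> rfl
  | cons a l ih =>
    cases m with
    | nil => rfl
    | cons b m => simp only [commonPrefixLength, ih m, eq_comm]

theorem min_commonPrefixLength_le (l m n : List A) :
    min (commonPrefixLength l m) (commonPrefixLength m n) ≤ commonPrefixLength l n := by
  induction l generalizing m n with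
  | nil => cases m <;> simp [commonPrefixLength]
  | cons a l ih =>
    rcases m with _ | ⟨b, m⟩
    · simp [commonPrefixLength]
    rcases n with _ | ⟨c, n⟩
    · simp [commonPrefixLength]
    have := ih m n
    simp only [commonPrefixLength]
    split_ifs <;> grind

end CommonPrefix

section FreeGroupLength

variable {κ : Type*}

theorem isReduced_invRev {l : List (κ × Bool)} (hl : IsReduced l) : IsReduced (invRev l) := by
  classical
  rw [isReduced_iff_reduce_eq, reduce_invRev, hl.reduce_eq]

theorem isReduced_invRev_append {a b : κ × Bool} {l m : List (κ × Bool)}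
    (hl : IsReduced (a :: l)) (hm : IsReduced (b :: m)) (hab : a ≠ b) :
    IsReduced (invRev (a :: l) ++ b :: m) := by
  refine List.isChain_append.2 ⟨isReduced_invRev hl, hm, ?_⟩
  simp only [invRev, List.map_cons, List.reverse_cons, List.getLast?_concat, List.head?_cons,
    Option.mem_some_iff, forall_eq']
  intro hfst
  have hsnd : a.2 ≠ b.2 := fun h => hab (Prod.ext hfst h)
  exact Bool.not_eq.2 hsnd

variable [DecidableEq κ]

theorem norm_mk_of_isReduced {l : List (κ × Bool)} (hl : IsReduced l) :
    (mk l).norm = l.length := by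
  rw [FreeGroup.norm, toWord_mk, hl.reduce_eq]

theorem norm_inv_mk_mul_mk_add {l m : List (κ × Bool)} (hl : IsReduced l) (hm : IsReduced m) :
    ((mk l)⁻¹ * mk m).norm + 2 * commonPrefixLength l m = l.length + m.length := by
  induction l generalizing m with
  | nil => simp [← one_eq_mk, norm_mk_of_isReduced hm, commonPrefixLength]
  | cons a l ih =>
    rcases m with _ | ⟨b, m⟩
    · rw [← one_eq_mk, mul_one, norm_inv_eq, norm_mk_of_isReduced hl]
      simp [commonPrefixLength]
    by_cases hab : a = b
    · subst hab
      have hcancel : (mk (a :: l))⁻¹ * mk (a :: m) = (mk l)⁻¹ * mk m := by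
        rw [← List.singleton_append, ← List.singleton_append (l := m), ← mul_mk, ← mul_mk]
        group
      have := ih (hl.infix (List.suffix_cons a l).isInfix) (hm.infix (List.suffix_cons a m).isInfix)
      simp only [hcancel, commonPrefixLength, if_true, List.length_cons]
      omega
    · rw [inv_mk, mul_mk, norm_mk_of_isReduced (isReduced_invRev_append hl hm hab)]
      simp [commonPrefixLength, hab]

theorem norm_lt_norm_mul_self {g : FreeGroup κ} (hg : g ≠ 1) : g.norm < (g * g).norm := by
  set c := reduceCyclically.conjugator g.toWord
  set r := reduceCyclically g.toWord
  have hword : c ++ r ++ invRev c = g.toWord :=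
    reduceCyclically.conj_conjugator_reduceCyclically g.toWord
  have hsq : (g * g).toWord = c ++ (r ++ r) ++ invRev c := by
    simpa [← pow_two, toWord_pow] using
      reduceCyclically.reduce_flatten_replicate_succ (isReduced_toWord (x := g)) 1
  have hr : r ≠ [] := by
    intro hr
    refine hg ?_
    rw [← mk_toWord (x := g), ← hword, hr, List.append_nil, ← mul_mk, ← inv_mk, mul_inv_cancel]
  have hpos := List.length_pos_iff.2 hr
  simp only [FreeGroup.norm, hsq, ← hword, List.length_append]
  omega

theorem exists_eq_mul_of_le_norm {g : FreeGroup κ} {n : ℕ} (hn : n ≤ g.norm) :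
    ∃ r q : FreeGroup κ, g = r * q ∧ r.norm = n ∧ r.norm + q.norm = g.norm := by
  have hr : IsReduced (g.toWord.take n) := isReduced_toWord.infix (List.take_prefix n _).isInfix
  have hq : IsReduced (g.toWord.drop n) := isReduced_toWord.infix (List.drop_suffix n _).isInfix
  refine ⟨mk (g.toWord.take n), mk (g.toWord.drop n), ?_, ?_, ?_⟩
  · rw [mul_mk, List.take_append_drop, mk_toWord]
  · rw [norm_mk_of_isReduced hr, List.length_take]
    exact min_eq_left hn
  · rw [norm_mk_of_isReduced hr, norm_mk_of_isReduced hq, ← List.length_append,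
      List.take_append_drop, FreeGroup.norm]

/-- The Gromov product of `g` and `h` in the Cayley tree of a free group, based at `1`, encoded as
the length of the longest common prefix of their reduced words. It counts the letters of `h`
cancelled in `g⁻¹ * h`. -/
def gromovProduct (g h : FreeGroup κ) : ℕ := commonPrefixLength g.toWord h.toWord

theorem gromovProduct_comm (g h : FreeGroup κ) : gromovProduct g h = gromovProduct h g :=
  commonPrefixLength_comm _ _

theorem min_gromovProduct_le (g h k : FreeGroup κ) :
    min (gromovProduct g h) (gromovProduct h k) ≤ gromovProduct g k :=
  min_commonPrefixLength_le _ _ _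

theorem norm_inv_mul_add (g h : FreeGroup κ) :
    (g⁻¹ * h).norm + 2 * gromovProduct g h = g.norm + h.norm := by
  simpa only [mk_toWord, gromovProduct, FreeGroup.norm] using
    norm_inv_mk_mul_mk_add (isReduced_toWord (x := g)) (isReduced_toWord (x := h))

theorem norm_mul_add (g h : FreeGroup κ) :
    (g * h).norm + 2 * gromovProduct g⁻¹ h = g.norm + h.norm := by
  simpa only [inv_inv, norm_inv_eq] using norm_inv_mul_add g⁻¹ h

theorem gromovProduct_self_mul_add (g h : FreeGroup κ) :
    gromovProduct g (g * h) + gromovProduct g⁻¹ h = g.norm := by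
  have h₁ := norm_inv_mul_add g (g * h)
  have h₂ := norm_mul_add g h
  rw [inv_mul_cancel_left] at h₁
  omega

theorem two_mul_gromovProduct_inv_self_lt {g : FreeGroup κ} (hg : g ≠ 1) :
    2 * gromovProduct g⁻¹ g < g.norm := by
  have h₁ := norm_lt_norm_mul_self hg
  have h₂ := norm_mul_add g g
  omega

theorem norm_inv_mul_add_of_le_gromovProduct {r q h : FreeGroup κ}
    (hrq : (r * q).norm = r.norm + q.norm) (hr : r.norm ≤ gromovProduct h (r * q)) :
    (r⁻¹ * h).norm + r.norm = h.norm := by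
  have h₁ := gromovProduct_self_mul_add r q
  have h₂ := norm_mul_add r q
  have h₃ := min_gromovProduct_le h (r * q) r
  have h₄ := norm_inv_mul_add r h
  have h₅ := norm_mul_le r (r⁻¹ * h)
  rw [mul_inv_cancel_left] at h₅
  rw [gromovProduct_comm (r * q), gromovProduct_comm h r] at h₃
  omega

theorem norm_mul_mul_add_of_le_gromovProduct {u r q : FreeGroup κ}
    (hrq : (r * q).norm = r.norm + q.norm)
    (hq : q.norm ≤ gromovProduct u (r * q)⁻¹) (hr : r.norm ≤ gromovProduct u⁻¹ (r * q))
    (hu : q.norm + r.norm ≤ u.norm) : (q * u * r).norm + (q.norm + r.norm) = u.norm := by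
  have hqu : (q * u).norm + q.norm = u.norm := by
    have hinv : (q⁻¹ * r⁻¹).norm = q⁻¹.norm + r⁻¹.norm := by
      rw [← mul_inv_rev, norm_inv_eq, norm_inv_eq, norm_inv_eq, hrq, add_comm]
    rw [← norm_inv_eq, mul_inv_rev] at hq
    simpa only [inv_inv, norm_inv_eq] using norm_inv_mul_add_of_le_gromovProduct hinv hq
  have hrqu : r.norm ≤ gromovProduct (q * u)⁻¹ (r * q) := by
    have hagree := norm_inv_mul_add (q * u)⁻¹ u⁻¹
    have hmin := min_gromovProduct_le (q * u)⁻¹ u⁻¹ (r * q)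
    rw [inv_inv, mul_inv_cancel_right, norm_inv_eq, norm_inv_eq] at hagree
    omega
  have hqur := norm_inv_mul_add_of_le_gromovProduct hrq hrqu
  rw [← mul_inv_rev, norm_inv_eq, norm_inv_eq] at hqur
  omega

end FreeGroupLength

section NielsenReduced

variable {ι κ G : Type*} [Group G]

/-- The formal inverse of a signed letter; `true` marks the positive letters, as in
`FreeGroup`. -/
def letterInv (a : ι × Bool) : ι × Bool := (a.1, !a.2)

/-- The value of a signed letter under the substitution `U`. -/
def evalLetter (U : ι → G) (a : ι × Bool) : G := cond a.2 (U a.1) (U a.1)⁻¹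

theorem evalLetter_letterInv (U : ι → G) (a : ι × Bool) :
    evalLetter U (letterInv a) = (evalLetter U a)⁻¹ := by
  rcases a with ⟨i, _ | _⟩ <;> simp [evalLetter, letterInv]

theorem eq_or_eq_letterInv_or_fst_ne (a b : ι × Bool) :
    a = b ∨ a = letterInv b ∨ a.1 ≠ b.1 := by
  rcases a with ⟨i, _ | _⟩ <;> rcases b with ⟨j, _ | _⟩ <;> simp [letterInv, em]

theorem letterInv_ne_of_isReduced {a b : ι × Bool} {l : List (ι × Bool)}
    (h : IsReduced (a :: b :: l)) : letterInv a ≠ b := by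
  rintro rfl
  simpa [letterInv] using (isReduced_cons_cons.1 h).1

theorem lift_apply_eq_prod_evalLetter [DecidableEq ι] (U : ι → G) (w : FreeGroup ι) :
    FreeGroup.lift U w = (w.toWord.map (evalLetter U)).prod := by
  conv_lhs => rw [← mk_toWord (x := w), lift_mk]
  rfl

variable [DecidableEq κ]

/-- Nielsen reduced families in a free group: in a reduced product of members of `U` and their
inverses, the cancellations of a factor with its two neighbours do not exhaust it. For three
consecutive factors `a⁻¹, b, c` the two products below count the letters of `b` cancelled by `a⁻¹`
and by `c`. -/
def IsNielsenReduced (U : ι → FreeGroup κ) : Prop :=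
  ∀ a b c : ι × Bool, a ≠ b → c ≠ letterInv b →
    gromovProduct (evalLetter U a) (evalLetter U b) +
      gromovProduct (evalLetter U c) (evalLetter U b)⁻¹ < (evalLetter U b).norm

namespace IsNielsenReduced

variable {U : ι → FreeGroup κ}

theorem gromovProduct_prod_le_and_length_le (hU : IsNielsenReduced U) (l : List (ι × Bool))
    {a s : ι × Bool} (hl : IsReduced (a :: l)) (hs : s ≠ a) :
    gromovProduct (evalLetter U s) (((a :: l).map (evalLetter U)).prod) ≤
        gromovProduct (evalLetter U s) (evalLetter U a) ∧
      (a :: l).length + gromovProduct (evalLetter U s) (evalLetter U a) ≤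
        (((a :: l).map (evalLetter U)).prod).norm := by
  induction l generalizing a s with
  | nil =>
    have := hU s a a hs (by simp [letterInv, Prod.ext_iff])
    simp only [List.map_cons, List.map_nil, List.prod_singleton, List.length_singleton]
    omega
  | cons b l ih =>
    have hab := letterInv_ne_of_isReduced hl
    obtain ⟨hprefix, hlength⟩ := ih (isReduced_cons_cons.1 hl).2 hab
    have hreduced := hU s a b hs hab.symm
    rw [List.map_cons, List.prod_cons]
    set w := ((b :: l).map (evalLetter U)).prod
    rw [evalLetter_letterInv] at hprefix hlength
    rw [gromovProduct_comm (evalLetter U b)] at hreduced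
    have hnorm := norm_mul_add (evalLetter U a) w
    -- `a * w` agrees with `a` for longer than `s` does, so `s` leaves both at the same place.
    have hagree := gromovProduct_self_mul_add (evalLetter U a) w
    have hmin := min_gromovProduct_le (evalLetter U s) (evalLetter U a * w) (evalLetter U a)
    rw [gromovProduct_comm (evalLetter U a * w)] at hmin
    simp only [List.length_cons] at hlength ⊢
    constructor <;> omega

theorem norm_le_norm_lift [DecidableEq ι] (hU : IsNielsenReduced U) (w : FreeGroup ι) :
    w.norm ≤ (FreeGroup.lift U w).norm := by
  have hw : IsReduced w.toWord := isReduced_toWord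
  rw [lift_apply_eq_prod_evalLetter]
  unfold FreeGroup.norm at *
  cases hl : w.toWord with
  | nil => simp
  | cons a l =>
    have hne : letterInv a ≠ a := by simp [letterInv, Prod.ext_iff]
    exact (Nat.le_add_right _ _).trans (hU.gromovProduct_prod_le_and_length_le l (hl ▸ hw) hne).2

theorem exists_of_eq_evalLetter (hU : IsNielsenReduced U)
    (hgen : Subgroup.closure (Set.range U) = ⊤) (k : κ) :
    ∃ a, of k = evalLetter U a := by
  classical
  obtain ⟨w, hw⟩ := lift_surjective_iff_closure_range_eq_top.2 hgen (of k)
  have hle : w.toWord.length ≤ 1 := (hU.norm_le_norm_lift w).trans_eq (by rw [hw, norm_of])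
  rw [lift_apply_eq_prod_evalLetter] at hw
  match hword : w.toWord with
  | [] => simp [hword, eq_comm] at hw
  | [a] => exact ⟨a, by simpa [hword] using hw.symm⟩
  | a :: b :: l => simp [hword] at hle

end IsNielsenReduced

end NielsenReduced

section NielsenClosed

variable {G K : Type*} [Group G] [Group K]

/-- A property of pairs of elements of a group that is preserved by the elementary Nielsen moves
and by simultaneous conjugation. It lets a statement about a pair be transported along these moves
without an explicit orbit relation. -/
structure NielsenClosed (P : G → G → Prop) : Prop where
  swap {u v : G} : P u v → P v u
  inv {u v : G} : P u v → P u⁻¹ v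
  mul {u v : G} : P u v → P (u * v) v
  conj {u v : G} (q : G) : P u v → P (q * u * q⁻¹) (q * v * q⁻¹)

theorem NielsenClosed.and {P Q : G → G → Prop} (hP : NielsenClosed P) (hQ : NielsenClosed Q) :
    NielsenClosed fun u v => P u v ∧ Q u v where
  swap h := ⟨hP.swap h.1, hQ.swap h.2⟩
  inv h := ⟨hP.inv h.1, hQ.inv h.2⟩
  mul h := ⟨hP.mul h.1, hQ.mul h.2⟩
  conj q h := ⟨hP.conj q h.1, hQ.conj q h.2⟩

theorem left_mem_closure_pair (u v : G) : u ∈ Subgroup.closure {u, v} :=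
  Subgroup.mem_closure_of_mem (Set.mem_insert u {v})

theorem right_mem_closure_pair (u v : G) : v ∈ Subgroup.closure {u, v} :=
  Subgroup.mem_closure_of_mem (Set.mem_insert_of_mem u rfl)

theorem closure_pair_eq_top_of_mem {u v u' v' : G} (h : Subgroup.closure {u, v} = ⊤)
    (hu : u ∈ Subgroup.closure {u', v'}) (hv : v ∈ Subgroup.closure {u', v'}) :
    Subgroup.closure {u', v'} = ⊤ := by
  rw [eq_top_iff, ← h, Subgroup.closure_le]
  exact Set.pair_subset hu hv

theorem closure_pair_map_eq_top {u v : G} (h : Subgroup.closure {u, v} = ⊤) {f : G →* K}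
    (hf : Function.Surjective f) : Subgroup.closure {f u, f v} = ⊤ := by
  rw [← Set.image_pair, ← MonoidHom.map_closure, h, Subgroup.map_top_of_surjective f hf]

theorem nielsenClosed_closure_pair_eq_top :
    NielsenClosed fun u v : G => Subgroup.closure {u, v} = ⊤ where
  swap h := by rwa [Set.pair_comm]
  inv {u v} h := closure_pair_eq_top_of_mem h
    (inv_mem_iff.1 (left_mem_closure_pair u⁻¹ v)) (right_mem_closure_pair u⁻¹ v)
  mul {u v} h := closure_pair_eq_top_of_mem h
    ((Subgroup.mul_mem_cancel_right _ (right_mem_closure_pair (u * v) v)).1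
      (left_mem_closure_pair (u * v) v))
    (right_mem_closure_pair (u * v) v)
  conj q h :=
    closure_pair_map_eq_top h (f := (MulAut.conj q).toMonoidHom) (MulAut.conj q).surjective

theorem ne_one_of_closure_pair_eq_top {u v x y : G} (h : Subgroup.closure {u, v} = ⊤)
    (hxy : ¬ Commute x y) : u ≠ 1 := by
  rintro rfl
  rw [Subgroup.closure_insert_one, ← Subgroup.zpowers_eq_closure] at h
  obtain ⟨m, rfl⟩ := Subgroup.mem_zpowers_iff.1 (h ▸ Subgroup.mem_top x)
  obtain ⟨n, rfl⟩ := Subgroup.mem_zpowers_iff.1 (h ▸ Subgroup.mem_top y)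
  exact hxy (Commute.zpow_zpow_self v m n)

end NielsenClosed

section ShortestPair

variable {κ : Type*} [DecidableEq κ]

/-- A pair of least total length among the pairs in a free group with property `P`. -/
def IsShortestPair (P : FreeGroup κ → FreeGroup κ → Prop) (u v : FreeGroup κ) : Prop :=
  P u v ∧ ∀ u' v', P u' v' → u.norm + v.norm ≤ u'.norm + v'.norm

variable {P : FreeGroup κ → FreeGroup κ → Prop} {u v : FreeGroup κ}

theorem exists_isShortestPair (h : P u v) : ∃ u' v', IsShortestPair P u' v' := by
  obtain ⟨q, hq, hmin⟩ := exists_minimalFor_of_wellFoundedLT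
    (fun q : FreeGroup κ × FreeGroup κ => P q.1 q.2) (fun q => q.1.norm + q.2.norm) ⟨(u, v), h⟩
  exact ⟨q.1, q.2, hq, fun u' v' h' => (le_total _ _).elim id (hmin (j := (u', v')) h')⟩

namespace IsShortestPair

theorem swap (hP : NielsenClosed P) (h : IsShortestPair P u v) : IsShortestPair P v u :=
  ⟨hP.swap h.1, fun u' v' h' => (add_comm _ _).trans_le (h.2 u' v' h')⟩

theorem inv_left (hP : NielsenClosed P) (h : IsShortestPair P u v) : IsShortestPair P u⁻¹ v :=
  ⟨hP.inv h.1, by simpa only [norm_inv_eq] using h.2⟩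

theorem inv_right (hP : NielsenClosed P) (h : IsShortestPair P u v) : IsShortestPair P u v⁻¹ :=
  ((h.swap hP).inv_left hP).swap hP

theorem two_mul_gromovProduct_le (hP : NielsenClosed P) (h : IsShortestPair P u v) :
    2 * gromovProduct u v ≤ v.norm := by
  have hmul := h.2 _ _ (hP.mul (hP.inv h.1))
  have hnorm := norm_inv_mul_add u v
  omega

theorem gromovProduct_add_gromovProduct_inv_lt (hP : NielsenClosed P) (h : IsShortestPair P u v)
    (hv : v ≠ 1) : gromovProduct u v + gromovProduct u v⁻¹ < v.norm := by
  have h₁ := h.two_mul_gromovProduct_le hP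
  have h₂ := (h.inv_right hP).two_mul_gromovProduct_le hP
  have hself := two_mul_gromovProduct_inv_self_lt hv
  have hmin := min_gromovProduct_le v⁻¹ u v
  rw [norm_inv_eq] at h₂
  rw [gromovProduct_comm v⁻¹ u] at hmin
  omega

/-
If equality held, then `v = r * q` with `r` and `q` of equal length and `u = q⁻¹ * t * r⁻¹` without
cancellation. Conjugating `(u * v, v)` by `q` would give the shorter pair `(t, q * r)`.
-/
theorem gromovProduct_inv_add_gromovProduct_inv_lt (hP : NielsenClosed P)
    (h : IsShortestPair P u v) (hv : v ≠ 1) :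
    gromovProduct u⁻¹ v + gromovProduct u v⁻¹ < v.norm := by
  by_contra! hge
  have h₁ := (h.inv_left hP).two_mul_gromovProduct_le hP
  have h₂ := (h.inv_right hP).two_mul_gromovProduct_le hP
  have hu := ((h.inv_left hP).swap hP).two_mul_gromovProduct_le hP
  rw [norm_inv_eq] at h₂ hu
  rw [gromovProduct_comm] at hu
  obtain ⟨r, q, rfl, hr, hrq⟩ := exists_eq_mul_of_le_norm (g := v) (n := gromovProduct u⁻¹ v)
    (by omega)
  have hpos : (r * q).norm ≠ 0 := norm_eq_zero.not.2 hv
  have hqur :=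
    norm_mul_mul_add_of_le_gromovProduct (u := u) hrq.symm (by omega) (by omega) (by omega)
  have hshort := h.2 _ _ (hP.conj q (hP.mul h.1))
  have hconj₁ : q * (u * (r * q)) * q⁻¹ = q * u * r := by group
  have hconj₂ : q * (r * q) * q⁻¹ = q * r := by group
  rw [hconj₁, hconj₂] at hshort
  have hqr := norm_mul_le q r
  omega

theorem evalLetter_pair (hP : NielsenClosed P) (h : IsShortestPair P u v) {a b : Fin 2 × Bool}
    (hab : a.1 ≠ b.1) : IsShortestPair P (evalLetter ![u, v] a) (evalLetter ![u, v] b) := by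
  have hsigns {u v : FreeGroup κ} (h : IsShortestPair P u v) (s t : Bool) :
      IsShortestPair P (cond s u u⁻¹) (cond t v v⁻¹) := by
    cases s <;> cases t
    exacts [(h.inv_left hP).inv_right hP, h.inv_left hP, h.inv_right hP, h]
  obtain ⟨i, s⟩ := a
  obtain ⟨j, t⟩ := b
  fin_cases i <;> fin_cases j
  exacts [absurd rfl hab, hsigns h s t, hsigns (h.swap hP) s t, absurd rfl hab]

theorem isNielsenReduced (hP : NielsenClosed P) (h : IsShortestPair P u v) (hu : u ≠ 1)
    (hv : v ≠ 1) : IsNielsenReduced ![u, v] := by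
  intro a b c hab hcb
  have hb : evalLetter ![u, v] b ≠ 1 := by
    obtain ⟨i, _ | _⟩ := b <;> fin_cases i <;> simpa [evalLetter]
  have hself := two_mul_gromovProduct_inv_self_lt hb
  have hhalf {d : Fin 2 × Bool} (hd : d.1 ≠ b.1) :=
    (h.evalLetter_pair hP hd).two_mul_gromovProduct_le hP
  have hhalf' {d : Fin 2 × Bool} (hd : d.1 ≠ b.1) :=
    ((h.evalLetter_pair hP hd).inv_right hP).two_mul_gromovProduct_le hP
  simp only [norm_inv_eq] at hhalf'
  rcases eq_or_eq_letterInv_or_fst_ne a b with rfl | rfl | ha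
  · exact absurd rfl hab
  · rw [evalLetter_letterInv]
    rcases eq_or_eq_letterInv_or_fst_ne c b with rfl | rfl | hc
    · rw [gromovProduct_comm (evalLetter _ c)]
      omega
    · exact absurd rfl hcb
    · have := hhalf' hc
      omega
  rcases eq_or_eq_letterInv_or_fst_ne c b with rfl | rfl | hc
  · have := hhalf ha
    rw [gromovProduct_comm (evalLetter _ c)]
    omega
  · exact absurd rfl hcb
  rcases eq_or_eq_letterInv_or_fst_ne a c with rfl | rfl | hac
  · exact (h.evalLetter_pair hP ha).gromovProduct_add_gromovProduct_inv_lt hP hb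
  · rw [evalLetter_letterInv]
    exact (h.evalLetter_pair hP hc).gromovProduct_inv_add_gromovProduct_inv_lt hP hb
  · omega

end IsShortestPair

end ShortestPair

section RankTwo

theorem not_commute_of_zero_of_one : ¬ Commute (of 0 : FreeGroup (Fin 2)) (of 1) := by
  unfold Commute SemiconjBy
  decide

theorem NielsenClosed.of_zero_of_one {P : FreeGroup (Fin 2) → FreeGroup (Fin 2) → Prop}
    (hP : NielsenClosed P) {u v : FreeGroup (Fin 2)} (h : P u v)
    (hgen : Subgroup.closure {u, v} = ⊤) : P (of 0) (of 1) := by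
  have hPgen := hP.and nielsenClosed_closure_pair_eq_top
  obtain ⟨u, v, hmin⟩ := exists_isShortestPair
    (P := fun u v => P u v ∧ Subgroup.closure {u, v} = ⊤) ⟨h, hgen⟩
  have hu := ne_one_of_closure_pair_eq_top hmin.1.2 not_commute_of_zero_of_one
  have hv := ne_one_of_closure_pair_eq_top (hmin.swap hPgen).1.2 not_commute_of_zero_of_one
  have hreduced := hmin.isNielsenReduced hPgen hu hv
  have hrange : Subgroup.closure (Set.range ![u, v]) = ⊤ := by
    rw [Matrix.range_cons_cons_empty]
    exact hmin.1.2
  obtain ⟨a, ha⟩ := hreduced.exists_of_eq_evalLetter hrange 0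
  obtain ⟨b, hb⟩ := hreduced.exists_of_eq_evalLetter hrange 1
  rcases eq_or_eq_letterInv_or_fst_ne a b with rfl | rfl | hab
  · exact absurd (ha.trans hb.symm) (by decide)
  · rw [evalLetter_letterInv, ← hb] at ha
    exact absurd ha (by decide)
  · rw [ha, hb]
    exact (hmin.evalLetter_pair hPgen hab).1.1

end RankTwo

section Commutator

variable {G K : Type*} [Group G] [Group K]

/-- `b` is conjugate to `a` or to `a⁻¹`; the relation between the commutators of Nielsen
equivalent pairs. -/
def IsConjUpToInv (a b : G) : Prop := IsConj a b ∨ IsConj a⁻¹ b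

namespace IsConjUpToInv

variable {a b c : G}

theorem inv_left (h : IsConjUpToInv a b) : IsConjUpToInv a⁻¹ b := by
  rw [IsConjUpToInv, inv_inv]
  exact h.symm

theorem of_isConj_left (h : IsConjUpToInv a b) (hac : IsConj a c) : IsConjUpToInv c b := by
  obtain ⟨g, rfl⟩ := isConj_iff.1 hac
  have hinv : IsConj a⁻¹ (g * a * g⁻¹)⁻¹ := isConj_iff.2 ⟨g, conj_inv.symm⟩
  exact h.imp hac.symm.trans hinv.symm.trans

theorem map (h : IsConjUpToInv a b) (f : G →* K) : IsConjUpToInv (f a) (f b) := by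
  rw [IsConjUpToInv, ← f.map_inv]
  exact h.imp f.map_isConj f.map_isConj

end IsConjUpToInv

theorem commE_inv (a b : G) : (commE a b)⁻¹ = commE b a := by
  unfold commE
  group

theorem map_commE (f : G →* K) (a b : G) : f (commE a b) = commE (f a) (f b) := by
  simp only [commE, f.map_mul, f.map_inv]

theorem nielsenClosed_isConjUpToInv_commE (c : G) :
    NielsenClosed fun u v : G => IsConjUpToInv (commE u v) c where
  swap {u v} h := commE_inv u v ▸ h.inv_left
  inv {u v} h := h.inv_left.of_isConj_left <| isConj_iff.2 ⟨u, by unfold commE; group⟩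
  mul {u v} h := h.of_isConj_left <| isConj_iff.2 ⟨v⁻¹, by unfold commE; group⟩
  conj {u v} q h := h.of_isConj_left <| isConj_iff.2 ⟨q, by unfold commE; group⟩

theorem isConjUpToInv_commE_of_closure_eq_top {u v : FreeGroup (Fin 2)}
    (hgen : Subgroup.closure {u, v} = ⊤) :
    IsConjUpToInv (commE (of 0) (of 1)) (commE u v) :=
  (nielsenClosed_isConjUpToInv_commE (commE u v)).of_zero_of_one (.inl (.refl _)) hgen

theorem closure_of_zero_of_one :
    Subgroup.closure {(of 0 : FreeGroup (Fin 2)), of 1} = ⊤ := by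
  rw [← closure_range_of, ← Matrix.range_cons_cons_empty (of 0) (of 1) ![]]
  congr 2
  ext i
  fin_cases i <;> rfl

theorem NielsenEquiv.isConjUpToInv_commE {p p' : G × G} (h : NielsenEquiv p p') :
    IsConjUpToInv (commE p.1 p.2) (commE p'.1 p'.2) := by
  obtain ⟨α, hα⟩ := h
  have hgen := closure_pair_map_eq_top closure_of_zero_of_one (f := α.toMonoidHom) α.surjective
  have hconj := (isConjUpToInv_commE_of_closure_eq_top hgen).map (eta p)
  have hcomp (i : Fin 2) : eta p (α.toMonoidHom (of i)) = ![p'.1, p'.2] i := by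
    rw [← MonoidHom.comp_apply, ← hα, eta, lift_apply_of]
  have hof (i : Fin 2) : eta p (of i) = ![p.1, p.2] i := lift_apply_of
  rwa [map_commE, map_commE, hcomp, hcomp, hof, hof] at hconj

end Commutator

theorem stmt7_general (H : Type*) [Group H] (h1 h2 h1' h2' : H)
    (hne : NielsenEquiv (h1, h2) (h1', h2')) :
    ∃ g : H, commE h1' h2' = g⁻¹ * commE h1 h2 * g ∨
      commE h1' h2' = g⁻¹ * commE h2 h1 * g := by
  rcases hne.isConjUpToInv_commE with h | h <;> obtain ⟨g, hg⟩ := isConj_iff.1 h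
  · exact ⟨g⁻¹, .inl (by rw [← hg, inv_inv])⟩
  · exact ⟨g⁻¹, .inr (by rw [← hg, commE_inv, inv_inv])⟩

/-- if generating pairs `(h1,h2)` and `(h1',h2')` of `H` are Nielsen
equivalent, then `[h1',h2']` is conjugate to `[h1,h2]` or to `[h2,h1]`. -/
theorem stmt7 (H : Type*) [Group H] (h1 h2 h1' h2' : H)
    (hgen : Subgroup.closure {h1, h2} = ⊤) (hgen' : Subgroup.closure {h1', h2'} = ⊤)
    (hne : NielsenEquiv (h1, h2) (h1', h2')) :
    ∃ g : H, commE h1' h2' = g⁻¹ * commE h1 h2 * g ∨ commE h1' h2' = g⁻¹ * commE h2 h1 * g := by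
  exact stmt7_general H h1 h2 h1' h2' hne
end

section
/- Let q be a prime power and let A, B, A', B' ∈ SL(2,F_q) be such that the images (Ā,B̄) and (Ā',B̄') in PSL(2,q) are generating pairs of PSL(2,q) that are Nielsen equivalent. Then tr([A,B]) = tr([A',B']). -/
/-- `SL(2,F)` -/
abbrev SL2 (F : Type) [Field F] : Type := Matrix.SpecialLinearGroup (Fin 2) F

/-- `PSL(2,F)`, the quotient of `SL(2,F)` by its centre `{±I}`. -/
abbrev PSL2 (F : Type) [Field F] : Type := SL2 F ⧸ Subgroup.center (SL2 F)

/-- The canonical projection `SL(2,F) → PSL(2,F)`. -/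
def proj (F : Type) [Field F] : SL2 F →* PSL2 F := QuotientGroup.mk' (Subgroup.center (SL2 F))

/-!
Let `A, B ∈ SL(2, R)` have traces `x = tr A`, `y = tr B`, `z = tr (A * B)`. Every word in `A, B` is
a combination of `1, A, B, A * B` with coefficients in `ℤ[x, y, z]`, so for two words `U, V` the
determinant of `U * V - V * U`, which equals `2 - tr (U⁻¹ * V⁻¹ * U * V)`, is a multiple of
`det (A * B - B * A)` by an element `κ` of `ℤ[x, y, z]`. If `x, y, z` are algebraically independent
and `U, V` generate the same subgroup as `A, B`, then `κ` is a unit of `ℤ[x, y, z]`, that is `±1`;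
at `x = y = z = 2` it is the square of an integer, so `κ = 1`.

An arbitrary pair over `R` is the first component of a pair over `R × E` for which `ℤ[x, y, z]`
embeds in the second factor, so it inherits the conclusion. Finally, commutators in `SL(2, R)` only
depend on classes modulo the centre.
-/

open MvPolynomial Subgroup
open scoped MatrixGroups

section Nielsen

variable {G H : Type*} [Group G] [Group H]

@[simp]
lemma eta_of_zero (p : G × G) : eta p (.of 0) = p.1 := by simp [eta]

@[simp]
lemma eta_of_one (p : G × G) : eta p (.of 1) = p.2 := by simp [eta]

lemma range_eta (p : G × G) : (eta p).range = closure {p.1, p.2} := by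
  rw [eta, FreeGroup.range_lift_eq_closure, Matrix.range_cons_cons_empty]

lemma map_eta (f : G →* H) (a b : G) (w : FreeGroup (Fin 2)) :
    f (eta (a, b) w) = eta (f a, f b) w := by
  have hcomp : f.comp (eta (a, b)) = eta (f a, f b) := by
    ext i
    fin_cases i <;> simp
  exact DFunLike.congr_fun hcomp w

lemma NielsenEquiv.closure_eq {p p' : G × G} (h : NielsenEquiv p p') :
    closure {p'.1, p'.2} = closure {p.1, p.2} := by
  obtain ⟨α, hα⟩ := h
  rw [← range_eta, ← range_eta, hα, MonoidHom.range_comp,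
    MonoidHom.range_eq_top.2 α.surjective, MonoidHom.range_eq_map]

lemma NielsenEquiv.exists_lift (f : G →* H) {a b : G} {a' b' : H}
    (h : NielsenEquiv (f a, f b) (a', b')) :
    ∃ u v : G, NielsenEquiv (a, b) (u, v) ∧ f u = a' ∧ f v = b' := by
  obtain ⟨α, hα⟩ := h
  refine ⟨eta (a, b) (α (.of 0)), eta (a, b) (α (.of 1)), ⟨α, ?_⟩, ?_, ?_⟩
  · ext i
    fin_cases i <;> simp
  · simpa [map_eta] using (DFunLike.congr_fun hα (.of 0)).symm
  · simpa [map_eta] using (DFunLike.congr_fun hα (.of 1)).symm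

lemma inv_mul_mul_eq_of_mk_center_eq {a a' : G} (h : (a : G ⧸ center G) = a') (g : G) :
    a⁻¹ * g * a = a'⁻¹ * g * a' := by
  have hcomm : a⁻¹ * g * a * (a⁻¹ * a') = a⁻¹ * a' * (a⁻¹ * g * a) :=
    mem_center_iff.1 (QuotientGroup.eq.1 h) _
  calc a⁻¹ * g * a = (a⁻¹ * a')⁻¹ * (a⁻¹ * a' * (a⁻¹ * g * a)) := by group
    _ = (a⁻¹ * a')⁻¹ * (a⁻¹ * g * a * (a⁻¹ * a')) := by rw [hcomm]
    _ = a'⁻¹ * g * a' := by group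

lemma commutator_eq_of_mk_center_eq {a a' b b' : G} (ha : (a : G ⧸ center G) = a')
    (hb : (b : G ⧸ center G) = b') : a⁻¹ * b⁻¹ * a * b = a'⁻¹ * b'⁻¹ * a' * b' := by
  calc a⁻¹ * b⁻¹ * a * b = a'⁻¹ * b⁻¹ * a' * b := by rw [inv_mul_mul_eq_of_mk_center_eq ha]
    _ = a'⁻¹ * (b⁻¹ * a' * b) := by group
    _ = a'⁻¹ * (b'⁻¹ * a' * b') := by rw [inv_mul_mul_eq_of_mk_center_eq hb]
    _ = a'⁻¹ * b'⁻¹ * a' * b' := by group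

end Nielsen

section Matrix

variable {R : Type*} [CommRing R]

lemma adjugate_eq_trace_smul_one_sub (A : Matrix (Fin 2) (Fin 2) R) :
    A.adjugate = A.trace • 1 - A := by
  rw [Matrix.adjugate_fin_two]
  ext i j
  fin_cases i <;> fin_cases j <;> simp [Matrix.trace_fin_two]

lemma mul_self_eq_trace_smul_sub_det_smul_one (A : Matrix (Fin 2) (Fin 2) R) :
    A * A = A.trace • A - A.det • 1 := by
  rw [← Matrix.mul_adjugate, adjugate_eq_trace_smul_one_sub, mul_sub, mul_smul_comm, mul_one,
    sub_sub_cancel]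

lemma mul_swap_eq (A B : Matrix (Fin 2) (Fin 2) R) :
    B * A = ((A * B).trace - A.trace * B.trace) • 1 + B.trace • A + A.trace • B - A * B := by
  ext i j
  fin_cases i <;> fin_cases j <;> simp [Matrix.mul_apply, Matrix.trace_fin_two] <;> ring

lemma lie_eq_mul_lie (A B : Matrix (Fin 2) (Fin 2) R) (a b c d a' b' c' d' : R) :
    ⁅a • 1 + b • A + c • B + d • (A * B), a' • 1 + b' • A + c' • B + d' • (A * B)⁆ =
      ((b * c' - c * b') • 1 + (b * d' - d * b') • A - (c * d' - d * c') • B.adjugate) *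
        ⁅A, B⁆ := by
  rw [Matrix.adjugate_fin_two]
  ext i j
  fin_cases i <;> fin_cases j <;> simp [Ring.lie_def, Matrix.mul_apply] <;> ring

lemma det_add_smul_sub_smul_adjugate (A B : Matrix (Fin 2) (Fin 2) R) (a b c : R) :
    (a • 1 + b • A - c • B.adjugate).det =
      a ^ 2 + b ^ 2 * A.det + c ^ 2 * B.det + a * b * A.trace - a * c * B.trace -
        b * c * (A * B).trace := by
  simp only [Matrix.adjugate_fin_two, Matrix.det_fin_two, Matrix.trace_fin_two, Matrix.mul_apply,
    Fin.sum_univ_two, Matrix.add_apply, Matrix.sub_apply, Matrix.smul_apply, Matrix.one_fin_two,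
    Matrix.of_apply, Matrix.cons_val, smul_eq_mul]
  ring

lemma det_lie_eq_trace_polynomial (A B : Matrix (Fin 2) (Fin 2) R) :
    ⁅A, B⁆.det = 4 * A.det * B.det - A.trace ^ 2 * B.det - B.trace ^ 2 * A.det -
      (A * B).trace ^ 2 + A.trace * B.trace * (A * B).trace := by
  simp only [Ring.lie_def, Matrix.det_fin_two, Matrix.trace_fin_two, Matrix.mul_apply,
    Fin.sum_univ_two, Matrix.sub_apply]
  ring

lemma det_sub_one_eq_det_sub_trace_add_one (A : Matrix (Fin 2) (Fin 2) R) :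
    (A - 1).det = A.det - A.trace + 1 := by
  simp only [Matrix.det_fin_two, Matrix.trace_fin_two, Matrix.sub_apply, Matrix.one_fin_two,
    Matrix.of_apply, Matrix.cons_val]
  ring

lemma det_lie_eq_two_sub_trace_commutator (A B : SL(2, R)) :
    ⁅A.1, B.1⁆.det = 2 - (A⁻¹ * B⁻¹ * A * B).1.trace := by
  have hlie : ⁅A.1, B.1⁆ = (B * A).1 * ((A⁻¹ * B⁻¹ * A * B).1 - 1) := by
    have hmul : B * A * (A⁻¹ * B⁻¹ * A * B) = A * B := by group
    rw [mul_sub, mul_one, ← Matrix.SpecialLinearGroup.coe_mul, hmul, Ring.lie_def,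
      Matrix.SpecialLinearGroup.coe_mul, Matrix.SpecialLinearGroup.coe_mul]
  rw [hlie, Matrix.det_mul, det_sub_one_eq_det_sub_trace_add_one, Matrix.SpecialLinearGroup.det_coe,
    Matrix.SpecialLinearGroup.det_coe]
  ring

end Matrix

section Prod

variable {n R S : Type*} [Fintype n] [DecidableEq n] [CommRing R] [CommRing S]

/-- The element of `SL(n, R × S)` with components `A` and `B`, through which properties are carried
from one base ring to another. -/
def specialLinearGroupProd (A : Matrix.SpecialLinearGroup n R)
    (B : Matrix.SpecialLinearGroup n S) : Matrix.SpecialLinearGroup n (R × S) :=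
  ⟨Matrix.of fun i j ↦ (A i j, B i j), Prod.ext
    ((RingHom.map_det (RingHom.fst R S) _).trans A.det_coe)
    ((RingHom.map_det (RingHom.snd R S) _).trans B.det_coe)⟩

lemma map_fst_specialLinearGroupProd (A : Matrix.SpecialLinearGroup n R)
    (B : Matrix.SpecialLinearGroup n S) :
    Matrix.SpecialLinearGroup.map (RingHom.fst R S) (specialLinearGroupProd A B) = A :=
  rfl

lemma specialLinearGroupProd_mul (A B : Matrix.SpecialLinearGroup n R)
    (C D : Matrix.SpecialLinearGroup n S) :
    specialLinearGroupProd A C * specialLinearGroupProd B D =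
      specialLinearGroupProd (A * B) (C * D) :=
  Matrix.SpecialLinearGroup.ext _ _ fun _ _ ↦ Prod.ext Prod.fst_sum Prod.snd_sum

lemma trace_specialLinearGroupProd (A : Matrix.SpecialLinearGroup n R)
    (B : Matrix.SpecialLinearGroup n S) :
    (specialLinearGroupProd A B).1.trace = (A.1.trace, B.1.trace) :=
  Prod.ext (AddMonoidHom.map_trace (RingHom.fst R S) _) (AddMonoidHom.map_trace (RingHom.snd R S) _)

end Prod

section FrickeTriple

variable {T R S : Type*} [CommRing T] [CommRing R] [CommRing S] [Algebra T R] [Algebra T S]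

/-- The elements `x, y, z` of `T` represent the Fricke coordinates `tr A`, `tr B`, `tr (A * B)` of a
pair in `SL(2, R)`, for `R` a `T`-algebra. -/
structure IsFrickeTriple (x y z : T) (A B : SL(2, R)) : Prop where
  trace_fst : algebraMap T R x = A.1.trace
  trace_snd : algebraMap T R y = B.1.trace
  trace_mul : algebraMap T R z = (A * B).1.trace

variable (T) in
/-- The `T`-submodule of the `2 × 2` matrices spanned by `1, A, B, A * B`. When `T` contains the
traces of `A`, `B` and `A * B`, it contains all words in `A` and `B`. -/
def frickeSpan (A B : SL(2, R)) : Submodule T (Matrix (Fin 2) (Fin 2) R) :=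
  Submodule.span T {1, A.1, B.1, A.1 * B.1}

/-- The ternary quadratic form `det (a + b * A - c * B⁻¹)`, expressed through the traces `x, y, z`
of `A`, `B`, `A * B`. -/
def frickeForm (x y z a b c : T) : T :=
  a ^ 2 + b ^ 2 + c ^ 2 + a * b * x - a * c * y - b * c * z

lemma mem_frickeSpan {A B : SL(2, R)} {M : Matrix (Fin 2) (Fin 2) R} :
    M ∈ frickeSpan T A B ↔
      ∃ a b c d : T, M = a • 1 + b • A.1 + c • B.1 + d • (A.1 * B.1) := by
  simp only [frickeSpan, Submodule.mem_span_insert, Submodule.mem_span_singleton]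
  constructor
  · rintro ⟨a, _, ⟨b, _, ⟨c, _, ⟨d, rfl⟩, rfl⟩, rfl⟩, rfl⟩
    exact ⟨a, b, c, d, by abel⟩
  · rintro ⟨a, b, c, d, rfl⟩
    exact ⟨a, _, ⟨b, _, ⟨c, _, ⟨d, rfl⟩, rfl⟩, rfl⟩, by abel⟩

lemma exists_lie_eq_mul_lie {A B : SL(2, R)} {M N : Matrix (Fin 2) (Fin 2) R}
    (hM : M ∈ frickeSpan T A B) (hN : N ∈ frickeSpan T A B) :
    ∃ a b c : T, ⁅M, N⁆ = (a • 1 + b • A.1 - c • (B⁻¹).1) * ⁅A.1, B.1⁆ := by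
  obtain ⟨m₀, m₁, m₂, m₃, rfl⟩ := mem_frickeSpan.1 hM
  obtain ⟨n₀, n₁, n₂, n₃, rfl⟩ := mem_frickeSpan.1 hN
  refine ⟨m₁ * n₂ - m₂ * n₁, m₁ * n₃ - m₃ * n₁, m₂ * n₃ - m₃ * n₂, ?_⟩
  simp only [← algebraMap_smul (R := T) R, lie_eq_mul_lie, map_sub, map_mul,
    Matrix.SpecialLinearGroup.coe_inv]

namespace IsFrickeTriple

variable {x y z : T} {A B U V : SL(2, R)} {M : Matrix (Fin 2) (Fin 2) R}

lemma mul_fst_mem_frickeSpan (h : IsFrickeTriple x y z A B) (hM : M ∈ frickeSpan T A B) :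
    M * A.1 ∈ frickeSpan T A B := by
  obtain ⟨a, b, c, d, rfl⟩ := mem_frickeSpan.1 hM
  refine mem_frickeSpan.2
    ⟨-b + c * (z - x * y) - d * y, a + b * x + c * y + d * z, c * x + d, -c, ?_⟩
  have hAA : A.1 * A.1 = x • A.1 - 1 := by
    rw [mul_self_eq_trace_smul_sub_det_smul_one, A.det_coe, one_smul, ← h.trace_fst,
      algebraMap_smul]
  have hBA : B.1 * A.1 = (z - x * y) • 1 + y • A.1 + x • B.1 - A.1 * B.1 := by
    rw [mul_swap_eq, ← Matrix.SpecialLinearGroup.coe_mul, ← h.trace_fst, ← h.trace_snd,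
      ← h.trace_mul, ← map_mul, ← map_sub]
    simp only [algebraMap_smul, Matrix.SpecialLinearGroup.coe_mul]
  have hABA : A.1 * B.1 * A.1 = z • A.1 - y • 1 + B.1 := by
    rw [mul_assoc, hBA]
    simp only [mul_add, mul_sub, mul_smul_comm, mul_one, ← mul_assoc, hAA, sub_mul, smul_mul_assoc,
      one_mul]
    module
  simp only [add_mul, smul_mul_assoc, one_mul, hAA, hBA, hABA]
  module

lemma mul_snd_mem_frickeSpan (h : IsFrickeTriple x y z A B) (hM : M ∈ frickeSpan T A B) :
    M * B.1 ∈ frickeSpan T A B := by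
  obtain ⟨a, b, c, d, rfl⟩ := mem_frickeSpan.1 hM
  refine mem_frickeSpan.2 ⟨-c, -d, a + c * y, b + d * y, ?_⟩
  have hB : B.1 * B.1 = y • B.1 - 1 := by
    rw [mul_self_eq_trace_smul_sub_det_smul_one, B.det_coe, one_smul, ← h.trace_snd,
      algebraMap_smul]
  simp only [add_mul, smul_mul_assoc, one_mul, mul_assoc, hB, mul_sub, mul_smul_comm, mul_one]
  module

lemma mem_frickeSpan_of_mem_closure (h : IsFrickeTriple x y z A B) (hU : U ∈ closure {A, B}) :
    U.1 ∈ frickeSpan T A B := by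
  induction hU using closure_induction_right with
  | one => exact Submodule.subset_span (by simp)
  | mul_right W _ C hC hW =>
    obtain rfl | rfl := hC
    · exact h.mul_fst_mem_frickeSpan hW
    · exact h.mul_snd_mem_frickeSpan hW
  | mul_inv_cancel W _ C hC hW =>
    rw [Matrix.SpecialLinearGroup.coe_mul, Matrix.SpecialLinearGroup.coe_inv,
      adjugate_eq_trace_smul_one_sub, mul_sub, mul_smul_comm, mul_one]
    obtain rfl | rfl := hC
    · rw [← h.trace_fst, algebraMap_smul]
      exact sub_mem (Submodule.smul_mem _ _ hW) (h.mul_fst_mem_frickeSpan hW)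
    · rw [← h.trace_snd, algebraMap_smul]
      exact sub_mem (Submodule.smul_mem _ _ hW) (h.mul_snd_mem_frickeSpan hW)

lemma exists_algebraMap_eq_trace (h : IsFrickeTriple x y z A B) (hM : M ∈ frickeSpan T A B) :
    ∃ t : T, algebraMap T R t = M.trace := by
  obtain ⟨a, b, c, d, rfl⟩ := mem_frickeSpan.1 hM
  refine ⟨2 * a + b * x + c * y + d * z, ?_⟩
  simp only [Matrix.trace_add, Matrix.trace_smul, Matrix.trace_one]
  simp only [Algebra.smul_def, map_add, map_mul, map_ofNat, h.trace_fst, h.trace_snd, h.trace_mul,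
    Matrix.SpecialLinearGroup.coe_mul, Fintype.card_fin, Nat.cast_ofNat, mul_comm]

lemma exists_isFrickeTriple_of_mem_closure (h : IsFrickeTriple x y z A B) (hU : U ∈ closure {A, B})
    (hV : V ∈ closure {A, B}) : ∃ x' y' z' : T, IsFrickeTriple x' y' z' U V := by
  obtain ⟨x', hx'⟩ := h.exists_algebraMap_eq_trace (h.mem_frickeSpan_of_mem_closure hU)
  obtain ⟨y', hy'⟩ := h.exists_algebraMap_eq_trace (h.mem_frickeSpan_of_mem_closure hV)
  obtain ⟨z', hz'⟩ :=
    h.exists_algebraMap_eq_trace (h.mem_frickeSpan_of_mem_closure (mul_mem hU hV))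
  exact ⟨x', y', z', hx', hy', hz'⟩

lemma det_eq_frickeForm (h : IsFrickeTriple x y z A B) (a b c : T) :
    (a • 1 + b • A.1 - c • (B⁻¹).1).det = algebraMap T R (frickeForm x y z a b c) := by
  simp only [← algebraMap_smul (R := T) R, Matrix.SpecialLinearGroup.coe_inv,
    det_add_smul_sub_smul_adjugate, ← Matrix.SpecialLinearGroup.coe_mul,
    Matrix.SpecialLinearGroup.det_coe, mul_one, ← h.trace_fst, ← h.trace_snd, ← h.trace_mul,
    frickeForm, map_add, map_sub, map_mul, map_pow]

lemma exists_det_lie_eq_mul_det_lie (h : IsFrickeTriple x y z A B) (hU : U ∈ closure {A, B})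
    (hV : V ∈ closure {A, B}) :
    ∃ a b c : T, ⁅U.1, V.1⁆.det = algebraMap T R (frickeForm x y z a b c) * ⁅A.1, B.1⁆.det := by
  obtain ⟨a, b, c, hlie⟩ := exists_lie_eq_mul_lie (h.mem_frickeSpan_of_mem_closure hU)
    (h.mem_frickeSpan_of_mem_closure hV)
  exact ⟨a, b, c, by rw [hlie, Matrix.det_mul, h.det_eq_frickeForm]⟩

lemma det_lie_eq (h : IsFrickeTriple x y z A B) :
    ⁅A.1, B.1⁆.det = algebraMap T R (4 - x ^ 2 - y ^ 2 - z ^ 2 + x * y * z) := by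
  simp only [det_lie_eq_trace_polynomial, ← Matrix.SpecialLinearGroup.coe_mul,
    Matrix.SpecialLinearGroup.det_coe, mul_one, ← h.trace_fst, ← h.trace_snd, ← h.trace_mul,
    map_add, map_sub, map_mul, map_pow, map_ofNat]

end IsFrickeTriple

lemma frickeForm_two (a b c : T) : frickeForm 2 2 2 a b c = (a + b - c) ^ 2 := by
  rw [frickeForm]
  ring

lemma map_frickeForm {F : Type*} [FunLike F R S] [RingHomClass F R S] (f : F) (x y z a b c : R) :
    f (frickeForm x y z a b c) = frickeForm (f x) (f y) (f z) (f a) (f b) (f c) := by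
  simp only [frickeForm, map_add, map_sub, map_mul, map_pow]

lemma frickeForm_X_eq_one_of_isUnit {a b c : MvPolynomial (Fin 3) ℤ}
    (h : IsUnit (frickeForm (X 0) (X 1) (X 2) a b c)) :
    frickeForm (X 0) (X 1) (X 2) a b c = 1 := by
  obtain ⟨r, hr, hC⟩ := isUnit_iff_eq_C_of_isReduced.1 h
  have hsq := congrArg (eval fun _ ↦ (2 : ℤ)) hC
  simp only [map_frickeForm, eval_X, frickeForm_two, eval_C] at hsq
  rcases Int.isUnit_iff.1 hr with rfl | rfl
  · rw [hC, map_one]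
  · linarith [sq_nonneg (eval (fun _ ↦ (2 : ℤ)) a + eval (fun _ ↦ 2) b - eval (fun _ ↦ 2) c)]

namespace IsFrickeTriple

lemma prod {x y z : T} {A B : SL(2, R)} {C D : SL(2, S)} (hAB : IsFrickeTriple x y z A B)
    (hCD : IsFrickeTriple x y z C D) :
    IsFrickeTriple x y z (specialLinearGroupProd A C) (specialLinearGroupProd B D) where
  trace_fst := by rw [trace_specialLinearGroupProd, ← hAB.trace_fst, ← hCD.trace_fst]; rfl
  trace_snd := by rw [trace_specialLinearGroupProd, ← hAB.trace_snd, ← hCD.trace_snd]; rfl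
  trace_mul := by
    rw [specialLinearGroupProd_mul, trace_specialLinearGroupProd, ← hAB.trace_mul, ← hCD.trace_mul]
    rfl

lemma exists_isFrickeTriple_quadraticAlgebra (x y z : T) :
    ∃ A B : SL(2, QuadraticAlgebra T (-1) z), IsFrickeTriple x y z A B := by
  let ι := algebraMap T (QuadraticAlgebra T (-1) z)
  -- `ω` is a root of `t ^ 2 - z * t + 1`, so it is a unit with inverse `z - ω`.
  let ω : QuadraticAlgebra T (-1) z := QuadraticAlgebra.omega
  have hω : ω * (ι z - ω) = 1 := by
    rw [mul_sub, QuadraticAlgebra.omega_mul_omega_eq_add, Algebra.smul_def, Algebra.smul_def,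
      map_neg, map_one]
    ring
  let A : SL(2, QuadraticAlgebra T (-1) z) := ⟨!![ι x, -1; 1, 0], by simp⟩
  let B : SL(2, QuadraticAlgebra T (-1) z) := ⟨!![0, ω; ω - ι z, ι y], by
    rw [Matrix.det_fin_two_of]
    linear_combination hω⟩
  have hA : A.1.trace = ι x := by simp [A, Matrix.trace_fin_two_of]
  have hB : B.1.trace = ι y := by simp [B, Matrix.trace_fin_two_of]
  have hAB : (A * B).1.trace = ι z := by
    rw [Matrix.SpecialLinearGroup.coe_mul]
    simp [A, B, Matrix.trace_fin_two]
  exact ⟨A, B, hA.symm, hB.symm, hAB.symm⟩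

lemma det_lie_eq_of_closure_eq [Algebra (MvPolynomial (Fin 3) ℤ) R] {A B U V : SL(2, R)}
    (hinj : Function.Injective (algebraMap (MvPolynomial (Fin 3) ℤ) R))
    (h : IsFrickeTriple (X 0 : MvPolynomial (Fin 3) ℤ) (X 1) (X 2) A B)
    (hcl : closure {U, V} = closure {A, B}) : ⁅U.1, V.1⁆.det = ⁅A.1, B.1⁆.det := by
  have hU : U ∈ closure {A, B} := hcl ▸ subset_closure (by simp)
  have hV : V ∈ closure {A, B} := hcl ▸ subset_closure (by simp)
  have hA : A ∈ closure {U, V} := hcl ▸ subset_closure (by simp)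
  have hB : B ∈ closure {U, V} := hcl ▸ subset_closure (by simp)
  obtain ⟨x', y', z', h'⟩ := h.exists_isFrickeTriple_of_mem_closure hU hV
  obtain ⟨a, b, c, hUV⟩ := h.exists_det_lie_eq_mul_det_lie hU hV
  obtain ⟨a', b', c', hAB⟩ := h'.exists_det_lie_eq_mul_det_lie hA hB
  set κ := frickeForm (X 0 : MvPolynomial (Fin 3) ℤ) (X 1) (X 2) a b c
  set κ' := frickeForm x' y' z' a' b' c'
  set δ : MvPolynomial (Fin 3) ℤ := 4 - X 0 ^ 2 - X 1 ^ 2 - X 2 ^ 2 + X 0 * X 1 * X 2 with hδ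
  have hδ_ne : δ ≠ 0 := by
    intro h0
    have h4 := congrArg (eval (0 : Fin 3 → ℤ)) h0
    simp only [hδ, map_add, map_sub, map_mul, map_pow, map_ofNat, eval_X, map_zero] at h4
    norm_num at h4
  have hmul : κ' * κ * δ = 1 * δ := hinj <| by
    rw [map_mul, map_mul, one_mul, ← h.det_lie_eq, mul_assoc, ← hUV, ← hAB]
  have hκ : κ = 1 :=
    frickeForm_X_eq_one_of_isUnit (IsUnit.of_mul_eq_one_right _ (mul_right_cancel₀ hδ_ne hmul))
  rw [hUV, hκ, map_one, one_mul]

end IsFrickeTriple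

end FrickeTriple

section Commutator

universe u

variable {R : Type u} [CommRing R] {A B A' B' : SL(2, R)}

lemma exists_generic_lift (A B : SL(2, R)) :
    ∃ (S : Type u) (_ : CommRing S) (_ : Algebra (MvPolynomial (Fin 3) ℤ) S) (f : S →+* R)
      (C D : SL(2, S)), Function.Injective (algebraMap (MvPolynomial (Fin 3) ℤ) S) ∧
      IsFrickeTriple (X 0 : MvPolynomial (Fin 3) ℤ) (X 1) (X 2) C D ∧
      Matrix.SpecialLinearGroup.map f C = A ∧ Matrix.SpecialLinearGroup.map f D = B := by
  let evalTraces : MvPolynomial (Fin 3) ℤ →ₐ[ℤ] R := aeval ![A.1.trace, B.1.trace, (A * B).1.trace]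
  let : Algebra (MvPolynomial (Fin 3) ℤ) R := evalTraces.toRingHom.toAlgebra
  have hAB : IsFrickeTriple (X 0 : MvPolynomial (Fin 3) ℤ) (X 1) (X 2) A B :=
    ⟨aeval_X _ 0, aeval_X _ 1, aeval_X _ 2⟩
  obtain ⟨C, D, hCD⟩ := IsFrickeTriple.exists_isFrickeTriple_quadraticAlgebra
    (X 0 : MvPolynomial (Fin 3) ℤ) (X 1) (X 2)
  refine ⟨R × QuadraticAlgebra (MvPolynomial (Fin 3) ℤ) (-1) (X 2), inferInstance, inferInstance,
    RingHom.fst R _, _, _, fun p q hpq ↦ ?_, hAB.prod hCD,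
    map_fst_specialLinearGroupProd A C, map_fst_specialLinearGroupProd B D⟩
  exact QuadraticAlgebra.algebraMap_injective (congrArg Prod.snd hpq)

theorem NielsenEquiv.trace_commutator_eq (h : NielsenEquiv (A, B) (A', B')) :
    (A⁻¹ * B⁻¹ * A * B).1.trace = (A'⁻¹ * B'⁻¹ * A' * B').1.trace := by
  obtain ⟨S, _, _, f, C, D, hinj, hCD, rfl, rfl⟩ := exists_generic_lift A B
  obtain ⟨U, V, hUV, rfl, rfl⟩ := h.exists_lift
  have htrace (W : SL(2, S)) : (Matrix.SpecialLinearGroup.map f W).1.trace = f W.1.trace :=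
    (AddMonoidHom.map_trace f W.1).symm
  have hdet : ⁅U.1, V.1⁆.det = ⁅C.1, D.1⁆.det := hCD.det_lie_eq_of_closure_eq hinj hUV.closure_eq
  rw [det_lie_eq_two_sub_trace_commutator, det_lie_eq_two_sub_trace_commutator,
    sub_right_inj] at hdet
  simp only [← map_inv, ← map_mul, htrace, hdet]

theorem stmt8_general
    (h : NielsenEquiv ((A : SL(2, R) ⧸ center SL(2, R)), (B : SL(2, R) ⧸ center SL(2, R)))
      ((A' : SL(2, R) ⧸ center SL(2, R)), (B' : SL(2, R) ⧸ center SL(2, R)))) :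
    (A⁻¹ * B⁻¹ * A * B).1.trace = (A'⁻¹ * B'⁻¹ * A' * B').1.trace := by
  obtain ⟨U, V, hUV, hU, hV⟩ := h.exists_lift (QuotientGroup.mk' (center SL(2, R)))
  rw [hUV.trace_commutator_eq, commutator_eq_of_mk_center_eq hU hV]

end Commutator

/-- if `A, B, A', B' ∈ SL(2,F_q)` are such that the images `(Ā, B̄)` and
`(Ā', B̄')` in `PSL(2,q)` are Nielsen equivalent generating pairs of `PSL(2,q)`, then
`tr([A,B]) = tr([A',B'])`. -/
theorem stmt8 (q : ℕ) (F : Type) [Field F] [Fintype F] (hcard : Fintype.card F = q)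
    (A B A' B' : SL2 F)
    (hgen : Subgroup.closure {proj F A, proj F B} = ⊤)
    (hgen' : Subgroup.closure {proj F A', proj F B'} = ⊤)
    (hne : NielsenEquiv (proj F A, proj F B) (proj F A', proj F B')) :
    Matrix.trace ((A⁻¹ * B⁻¹ * A * B : SL2 F) : Matrix (Fin 2) (Fin 2) F) =
      Matrix.trace ((A'⁻¹ * B'⁻¹ * A' * B' : SL2 F) : Matrix (Fin 2) (Fin 2) F) :=
  stmt8_general hne
end

section
/- Let q be a prime power with q ≡ 3 (mod 4), and suppose A, B ∈ SL(2,F_q) generate SL(2,F_q) (i.e. ⟨A,B⟩ = SL(2,F_q)) and A⁴ = I. Then tr([A,B]) ≠ −2. -/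
/-!
With `x = tr A`, `y = tr B` and `z = tr AB`, Fricke's identity reads
`tr [A, B] = x² + y² + z² - xyz - 2`. If `A⁴ = 1`, then either `A = ±1` and `[A, B] = 1`, or
`x = 0`, so that `tr [A, B] = -2` becomes `y² + z² = 0`. Where `-1` is not a square this forces
`y = z = 0`, whence `A`, `B` and `AB` all square to `-1` and `[A, B] = (AB)² = -1`. In either case
`[A, B]` is central. But a group generated by two elements with central commutator has central
derived subgroup, whereas two elementary matrices in `SL(2, F)` have a non-scalar commutator.
-/

open scoped MatrixGroups

section Group

variable {G : Type*} [Group G] {a b : G}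

theorem commutator_le_of_closure_pair_eq_top {N : Subgroup G} [N.Normal]
    (hgen : Subgroup.closure {a, b} = ⊤) (hN : a⁻¹ * b⁻¹ * a * b ∈ N) : commutator G ≤ N := by
  have hcomm : (b : G ⧸ N) * a = a * b :=
    QuotientGroup.eq.mpr (by simpa only [mul_inv_rev, mul_assoc] using hN)
  have htop : Subgroup.closure {(a : G ⧸ N), (b : G ⧸ N)} = ⊤ := by
    have hmap := congrArg (Subgroup.map (QuotientGroup.mk' N)) hgen
    rwa [MonoidHom.map_closure, Set.image_pair, ← MonoidHom.range_eq_map,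
      QuotientGroup.range_mk'] at hmap
  have hclosure := Subgroup.isMulCommutative_closure (k := {(a : G ⧸ N), (b : G ⧸ N)})
    (by rintro _ (rfl | rfl) _ (rfl | rfl) <;> simp only [hcomm])
  rw [htop] at hclosure
  refine Subgroup.Normal.quotient_commutative_iff_commutator_le.mp ⟨⟨fun g h ↦ ?_⟩⟩
  exact setLike_mul_comm (Subgroup.mem_top g) (Subgroup.mem_top h)

theorem inv_eq_neg_iff_sq_eq_neg_one [HasDistribNeg G] : a⁻¹ = -a ↔ a ^ 2 = -1 := by
  rw [inv_eq_iff_mul_eq_one, mul_neg, ← sq, neg_eq_iff_eq_neg]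

theorem commutator_eq_neg_one_of_sq_eq_neg_one [HasDistribNeg G]
    (ha : a ^ 2 = -1) (hb : b ^ 2 = -1) (hab : (a * b) ^ 2 = -1) :
    a⁻¹ * b⁻¹ * a * b = -1 := by
  rw [inv_eq_neg_iff_sq_eq_neg_one.mpr ha, inv_eq_neg_iff_sq_eq_neg_one.mpr hb,
    neg_mul_neg, mul_assoc, ← sq, hab]

end Group

theorem two_ne_zero_of_not_isSquare_neg_one {R : Type*} [CommRing R]
    (hR : ¬IsSquare (-1 : R)) : (2 : R) ≠ 0 :=
  fun h ↦ hR ⟨1, by linear_combination -h⟩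

theorem eq_zero_of_sq_add_sq_eq_zero {F : Type*} [Field F] (hF : ¬IsSquare (-1 : F)) {y z : F}
    (h : y ^ 2 + z ^ 2 = 0) : y = 0 ∧ z = 0 := by
  have hz : z = 0 := by
    by_contra hz
    refine hF ⟨y / z, ?_⟩
    field_simp
    linear_combination -h
  exact ⟨by simpa [hz] using h, hz⟩

namespace SL2

section CommRing

variable {R : Type*} [CommRing R]

theorem neg_one_mem_center : (-1 : SL(2, R)) ∈ Subgroup.center SL(2, R) :=
  Subgroup.mem_center_iff.mpr fun g ↦ by rw [mul_neg_one, neg_one_mul]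

theorem not_commutator_le_center [Nontrivial R] :
    ¬commutator SL(2, R) ≤ Subgroup.center SL(2, R) := by
  intro hle
  let U : SL(2, R) := ⟨!![1, 1; 0, 1], by simp⟩
  let L : SL(2, R) := ⟨!![1, 0; 1, 1], by simp⟩
  have hUL : U * L * U⁻¹ * L⁻¹ ∈ Subgroup.center SL(2, R) :=
    hle (Subgroup.commutator_mem_commutator (Subgroup.mem_top U) (Subgroup.mem_top L))
  obtain ⟨r, -, hr⟩ := Matrix.SpecialLinearGroup.mem_center_iff.mp hUL
  simp only [Matrix.SpecialLinearGroup.coe_mul, Matrix.SpecialLinearGroup.coe_inv] at hr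
  have hentry : (0 : R) = 1 := by
    simpa [U, L, Matrix.adjugate_fin_two_of] using congrFun₂ hr 1 0
  exact zero_ne_one hentry

theorem commutator_notMem_center_of_closure_eq_top [Nontrivial R] {A B : SL(2, R)}
    (hgen : Subgroup.closure {A, B} = ⊤) :
    A⁻¹ * B⁻¹ * A * B ∉ Subgroup.center SL(2, R) :=
  fun h ↦ not_commutator_le_center (commutator_le_of_closure_pair_eq_top hgen h)

theorem coe_add_coe_inv (A : SL(2, R)) : A.1 + A⁻¹.1 = A.1.trace • 1 := by
  rw [Matrix.SpecialLinearGroup.coe_inv, Matrix.adjugate_fin_two, Matrix.trace_fin_two]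
  ext i j
  fin_cases i <;> fin_cases j <;> simp [add_comm]

theorem trace_mul_add_trace_inv_mul (A B : SL(2, R)) :
    (A * B).1.trace + (A⁻¹ * B).1.trace = A.1.trace * B.1.trace := by
  rw [Matrix.SpecialLinearGroup.coe_mul, Matrix.SpecialLinearGroup.coe_mul, ← Matrix.trace_add,
    ← add_mul, coe_add_coe_inv, smul_mul_assoc, one_mul, Matrix.trace_smul, smul_eq_mul]

theorem trace_mul_comm (A B : SL(2, R)) : (A * B).1.trace = (B * A).1.trace :=
  Matrix.trace_mul_comm A.1 B.1

theorem trace_commutator (A B : SL(2, R)) :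
    (A⁻¹ * B⁻¹ * A * B).1.trace =
      A.1.trace ^ 2 + B.1.trace ^ 2 + (A * B).1.trace ^ 2
        - A.1.trace * B.1.trace * (A * B).1.trace - 2 := by
  have hconj : (B⁻¹ * A * B).1.trace = A.1.trace := by
    rw [trace_mul_comm, mul_inv_cancel_left]
  have hcomm : (A * (B⁻¹ * A * B)).1.trace + (A⁻¹ * B⁻¹ * A * B).1.trace = A.1.trace ^ 2 := by
    have h := trace_mul_add_trace_inv_mul A (B⁻¹ * A * B)
    rwa [hconj, ← sq, ← mul_assoc A⁻¹, ← mul_assoc A⁻¹] at h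
  have hsq : B.1.trace ^ 2 = (B * B).1.trace + 2 := by
    simpa [← sq] using (trace_mul_add_trace_inv_mul B B).symm
  have hinv : (A * B).1.trace + (B⁻¹ * A).1.trace = B.1.trace * A.1.trace := by
    rw [trace_mul_comm A B, trace_mul_add_trace_inv_mul]
  have hprod : (B * B).1.trace + (A * (B⁻¹ * A * B)).1.trace
      = (B⁻¹ * A).1.trace * (A * B).1.trace := by
    have h := trace_mul_add_trace_inv_mul (B⁻¹ * A) (B * A)
    have hfirst : (B⁻¹ * A * (B * A)).1.trace = (A * (B⁻¹ * A * B)).1.trace := by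
      rw [← mul_assoc, trace_mul_comm]
    have hsecond : ((B⁻¹ * A)⁻¹ * (B * A)).1.trace = (B * B).1.trace := by
      rw [trace_mul_comm, mul_inv_rev, inv_inv, mul_assoc, mul_inv_cancel_left]
    rwa [hfirst, hsecond, trace_mul_comm B A, add_comm] at h
  linear_combination hcomm - hprod - hsq - (A * B).1.trace * hinv

theorem sq_eq_neg_one_iff_trace_eq_zero {A : SL(2, R)} : A ^ 2 = -1 ↔ A.1.trace = 0 :=
  calc A ^ 2 = -1 ↔ A⁻¹ = -A := inv_eq_neg_iff_sq_eq_neg_one.symm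
    _ ↔ A.1 + A⁻¹.1 = 0 := by
      rw [← neg_eq_iff_add_eq_zero, eq_comm]
      exact Subtype.ext_iff
    _ ↔ A.1.trace = 0 := by
      rw [coe_add_coe_inv]
      exact ⟨fun h ↦ by simpa using congrFun₂ h 0 0, fun h ↦ by rw [h, zero_smul]⟩

end CommRing

section IsDomain

variable {R : Type*} [CommRing R] [IsDomain R]

theorem eq_one_or_eq_neg_one_of_sq_eq_one (h2 : (2 : R) ≠ 0) {A : SL(2, R)} (hA : A ^ 2 = 1) :
    A = 1 ∨ A = -1 := by
  have hinv : A⁻¹ = A := inv_eq_of_mul_eq_one_right (by rw [← sq, hA])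
  have hscalar : (2 : R) • A.1 = A.1.trace • 1 := by
    rw [two_smul, ← coe_add_coe_inv, hinv]
  have hoff {i j : Fin 2} (hij : i ≠ j) : A.1 i j = 0 := by
    simpa [h2, hij] using congrFun₂ hscalar i j
  have hdiag : A.1 0 0 = A.1 1 1 :=
    mul_left_cancel₀ h2 (by simpa using (congrFun₂ hscalar 0 0).trans (congrFun₂ hscalar 1 1).symm)
  have hdet : A.1 1 1 ^ 2 = 1 := by
    have h := A.det_coe
    rwa [Matrix.det_fin_two, hoff zero_ne_one, zero_mul, sub_zero, hdiag, ← sq] at h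
  refine (sq_eq_one_iff.mp hdet).imp (fun h ↦ ?_) (fun h ↦ ?_) <;> ext i j <;>
    fin_cases i <;> fin_cases j <;> simp [hoff, hdiag, h]

theorem mem_center_or_trace_eq_zero_of_pow_four_eq_one (h2 : (2 : R) ≠ 0) {A : SL(2, R)}
    (hA : A ^ 4 = 1) : A ∈ Subgroup.center SL(2, R) ∨ A.1.trace = 0 := by
  rcases eq_one_or_eq_neg_one_of_sq_eq_one h2 (A := A ^ 2) (by rw [← pow_mul, hA]) with hsq | hsq
  · rcases eq_one_or_eq_neg_one_of_sq_eq_one h2 hsq with rfl | rfl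
    · exact .inl (one_mem _)
    · exact .inl neg_one_mem_center
  · exact .inr (sq_eq_neg_one_iff_trace_eq_zero.mp hsq)

end IsDomain

theorem commutator_eq_neg_one_of_trace_eq_zero {F : Type*} [Field F]
    (hF : ¬IsSquare (-1 : F)) {A B : SL(2, F)} (hA : A.1.trace = 0)
    (htr : (A⁻¹ * B⁻¹ * A * B).1.trace = -2) :
    A⁻¹ * B⁻¹ * A * B = -1 := by
  have hsum : B.1.trace ^ 2 + (A * B).1.trace ^ 2 = 0 := by
    rw [trace_commutator, hA] at htr
    linear_combination htr
  obtain ⟨hB, hAB⟩ := eq_zero_of_sq_add_sq_eq_zero hF hsum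
  exact commutator_eq_neg_one_of_sq_eq_neg_one (sq_eq_neg_one_iff_trace_eq_zero.mpr hA)
    (sq_eq_neg_one_iff_trace_eq_zero.mpr hB) (sq_eq_neg_one_iff_trace_eq_zero.mpr hAB)

end SL2

theorem stmt10_general {F : Type*} [Field F] (hF : ¬IsSquare (-1 : F)) {A B : SL(2, F)}
    (hA : A ^ 4 = 1) (hAB : A⁻¹ * B⁻¹ * A * B ∉ Subgroup.center SL(2, F)) :
    (A⁻¹ * B⁻¹ * A * B).1.trace ≠ -2 := by
  intro htr
  have h2 := two_ne_zero_of_not_isSquare_neg_one hF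
  rcases SL2.mem_center_or_trace_eq_zero_of_pow_four_eq_one h2 hA with hcenter | htrace
  · have hcomm := Subgroup.mem_center_iff.mp hcenter B⁻¹
    rw [mul_assoc A⁻¹, hcomm, inv_mul_cancel_left, inv_mul_cancel] at hAB
    exact hAB (one_mem _)
  · rw [SL2.commutator_eq_neg_one_of_trace_eq_zero hF htrace htr] at hAB
    exact hAB SL2.neg_one_mem_center

/-- if `q ≡ 3 (mod 4)` and `A, B` generate `SL(2,q)` with `A⁴ = I`,
then `tr([A,B]) ≠ -2`. -/
theorem stmt10 (q : ℕ) (F : Type) [Field F] [Fintype F] (hcard : Fintype.card F = q)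
    (hq : q % 4 = 3) (A B : SL2 F)
    (hgen : Subgroup.closure {A, B} = ⊤) (hA : A ^ 4 = 1) :
    Matrix.trace ((A⁻¹ * B⁻¹ * A * B : SL2 F) : Matrix (Fin 2) (Fin 2) F) ≠ -2 :=
  stmt10_general (mt FiniteField.isSquare_neg_one_iff.mp (by omega)) hA
    (SL2.commutator_notMem_center_of_closure_eq_top hgen)
end

section
/- Let G = C_2 ∗ C_5 and H = PSL(2,5). Then for every generating pair (h1,h2) of H there exist a group homomorphism θ : G → H and a generating pair (g1,g2) of G with θ(g1) = h1 and θ(g2) = h2. -/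
instance : Fact (Nat.Prime 5) := ⟨by norm_num⟩

/-- The cyclic group of order `m`. -/
abbrev Cyc (m : ℕ) : Type := Multiplicative (ZMod m)

/-!
Lifting generating pairs is invariant under Nielsen moves, so it suffices to carry a generating pair
of `PSL(2,5)` to a pair of an involution and an element of order dividing `5`; such a pair lifts to
generators of the two free factors. The moves are followed on the traces `x`, `y`, `z` of `A`, `B`,
`A * B`.

If `x = ±2`, say `x = 2`, then `tr (Aⁿ * B) = y + n (z - y)` is an arithmetic progression. It is not
constant, because `det (A * B - B * A) = 4 + xyz - x² - y² - z²` does not vanish: the column space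
of a singular `A * B - B * A` would be preserved by the whole group. Hence some `Aⁿ * B` has trace
`0` and is an involution in `PSL(2,5)`, while `A ^ 5 = 1`.

If `x = 0` and neither `y` nor `z` is `±2`, then `(A, B)` or `(A, A * B)` consists of two
involutions, or `a² = b³ = (ab)³ = 1` holds; so the pair generates a solvable group, unlike
`PSL(2,5)`.

If `x`, `y`, `z` are all `±1`, then the trace `xy - z` of `A⁻¹ * B` is `0` or `±2`.
-/

open Subgroup
open scoped MatrixGroups

section Lifting

variable {G H : Type*} [Group G] [Group H]

theorem closure_pair_zpow_mul (a b : G) (n : ℤ) : closure {a, a ^ n * b} = closure {a, b} := by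
  have mem_left (c : G) : a ∈ closure {a, c} := subset_closure (by simp)
  have mem_right (c : G) : c ∈ closure {a, c} := subset_closure (by simp)
  refine le_antisymm ?_ ?_ <;>
    refine (closure_le _).2 (Set.insert_subset (mem_left _) (Set.singleton_subset_iff.2 ?_))
  · exact mul_mem (zpow_mem (mem_left b) n) (mem_right b)
  · simpa using mul_mem (zpow_mem (mem_left (a ^ n * b)) (-n)) (mem_right (a ^ n * b))

variable (G) in
/-- If the pair `(a, b)` generates `H`, then it is the image of a generating pair of `G` under some
homomorphism. Generation of `H` is a premise, so that it is carried along by the Nielsen moves. -/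
def GeneratingPairLifts (a b : H) : Prop :=
  closure {a, b} = ⊤ → ∃ (θ : G →* H) (g₁ g₂ : G), closure {g₁, g₂} = ⊤ ∧ θ g₁ = a ∧ θ g₂ = b

namespace GeneratingPairLifts

variable {a b : H}

theorem symm (h : GeneratingPairLifts G a b) : GeneratingPairLifts G b a := by
  intro hgen
  obtain ⟨θ, g₁, g₂, hgen', h₁, h₂⟩ := h (by rwa [Set.pair_comm])
  exact ⟨θ, g₂, g₁, by rwa [Set.pair_comm], h₂, h₁⟩

theorem of_zpow_mul (n : ℤ) (h : GeneratingPairLifts G a (a ^ n * b)) :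
    GeneratingPairLifts G a b := by
  intro hgen
  obtain ⟨θ, g₁, g₂, hgen', rfl, h₂⟩ := h (by rwa [closure_pair_zpow_mul])
  exact ⟨θ, g₁, g₁ ^ (-n) * g₂, by rwa [closure_pair_zpow_mul], rfl, by simp [h₂]⟩

theorem of_mul (h : GeneratingPairLifts G a (a * b)) : GeneratingPairLifts G a b :=
  of_zpow_mul 1 (by rwa [zpow_one])

theorem of_inv_mul (h : GeneratingPairLifts G a (a⁻¹ * b)) : GeneratingPairLifts G a b :=
  of_zpow_mul (-1) (by rwa [zpow_neg_one])

end GeneratingPairLifts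

theorem zpowers_ofAdd_one (m : ℕ) : zpowers (Multiplicative.ofAdd 1 : Cyc m) = ⊤ := by
  refine (eq_top_iff' _).2 fun x => mem_zpowers_iff.2 ⟨x.toAdd.cast, ?_⟩
  rw [← ofAdd_zsmul, zsmul_one, ZMod.intCast_zmod_cast, ofAdd_toAdd]

theorem exists_monoidHom_ofAdd_one_eq {m : ℕ} {x : H} (hx : x ^ m = 1) :
    ∃ f : Cyc m →* H, f (Multiplicative.ofAdd 1) = x := by
  let f := ZMod.lift m ⟨zmultiplesHom (Additive H) (Additive.ofMul x), by simp [← ofMul_pow, hx]⟩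
  have hf : f 1 = Additive.ofMul x := by rw [← Int.cast_one, ZMod.lift_coe]; simp
  exact ⟨AddMonoidHom.toMultiplicativeLeft f, congrArg Additive.toMul hf⟩

theorem generatingPairLifts_coprod {m n : ℕ} {a b : H} (ha : a ^ m = 1) (hb : b ^ n = 1) :
    GeneratingPairLifts (Monoid.Coprod (Cyc m) (Cyc n)) a b := by
  obtain ⟨f, rfl⟩ := exists_monoidHom_ofAdd_one_eq ha
  obtain ⟨g, rfl⟩ := exists_monoidHom_ofAdd_one_eq hb
  refine fun _ => ⟨Monoid.Coprod.lift f g, Monoid.Coprod.inl (Multiplicative.ofAdd 1),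
    Monoid.Coprod.inr (Multiplicative.ofAdd 1), ?_, by simp, by simp⟩
  rw [Set.insert_eq, Subgroup.closure_union, ← zpowers_eq_closure, ← zpowers_eq_closure,
    ← MonoidHom.map_zpowers, ← MonoidHom.map_zpowers, zpowers_ofAdd_one, zpowers_ofAdd_one,
    ← MonoidHom.range_eq_map, ← MonoidHom.range_eq_map, Monoid.Coprod.range_inl_sup_range_inr]

end Lifting

section Solvable

variable {G : Type*} [Group G]

theorem isSolvable_of_normal_sup_eq_top {N K : Subgroup G} [N.Normal] [Group.IsSolvable N]
    [Group.IsSolvable K] (h : N ⊔ K = ⊤) : Group.IsSolvable G := by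
  have hsurj : Function.Surjective ((QuotientGroup.mk' N).comp K.subtype) := by
    rw [← MonoidHom.range_eq_top, MonoidHom.range_comp, range_subtype,
      ← map_top_of_surjective _ (QuotientGroup.mk'_surjective N), ← h, Subgroup.map_sup,
      QuotientGroup.map_mk'_self, bot_sup_eq]
  exact (Group.isSolvable_iff_subgroup_quotient N).2
    ⟨inferInstance, Group.isSolvable_of_surjective hsurj⟩

theorem normal_closure_of_conj_mem {S T : Set G} [Finite T] (hS : closure S = ⊤)
    (hT : ∀ g ∈ S, ∀ t ∈ T, g * t * g⁻¹ ∈ T) : (closure T).Normal := by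
  rw [← normalizer_eq_top_iff, eq_top_iff, ← hS, closure_le]
  exact fun g hg => normalizer_le_normalizer_closure T (mem_normalizer_fintype (hT g hg))

variable {a b : G}

theorem isSolvable_of_commute_of_conj_mem {T : Set G} [Finite T]
    (hgen : closure {a, b} = ⊤) (hcomm : ∀ s ∈ T, ∀ t ∈ T, s * t = t * s)
    (ha : ∀ t ∈ T, a * t * a⁻¹ ∈ T) (hb : ∀ t ∈ T, b * t * b⁻¹ ∈ T)
    (hab : b ∈ closure T ⊔ zpowers a) : Group.IsSolvable G := by
  have hnormal : (closure T).Normal := normal_closure_of_conj_mem hgen (by simpa using ⟨ha, hb⟩)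
  have := isMulCommutative_closure hcomm
  have : Group.IsSolvable (closure T) := Group.isSolvable_of_comm mul_comm'
  have : Group.IsSolvable (zpowers a) := Group.isSolvable_of_comm mul_comm'
  refine isSolvable_of_normal_sup_eq_top (N := closure T) (K := zpowers a) (top_le_iff.1 ?_)
  rw [← hgen, closure_le]
  exact Set.insert_subset (mem_sup_right (mem_zpowers a)) (Set.singleton_subset_iff.2 hab)

theorem isSolvable_of_sq_eq_one_of_sq_eq_one (hgen : closure {a, b} = ⊤) (ha : a ^ 2 = 1)
    (hb : b ^ 2 = 1) : Group.IsSolvable G := by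
  rw [sq] at ha hb
  have ha' : a⁻¹ = a := inv_eq_of_mul_eq_one_left ha
  have hb' : b⁻¹ = b := inv_eq_of_mul_eq_one_left hb
  have hba : b * a = (a * b)⁻¹ := by rw [mul_inv_rev, ha', hb']
  have ha_conj : a * (a * b) * a⁻¹ = b * a := by rw [← mul_assoc, ha, one_mul, ha']
  have hb_conj : b * (b * a) * b⁻¹ = a * b := by rw [← mul_assoc, hb, one_mul, hb']
  refine isSolvable_of_commute_of_conj_mem (T := {a * b, b * a}) hgen ?_ ?_ ?_ ?_
  · simp [hba]
  · simpa [ha_conj] using .inl (by group)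
  · simpa [hb_conj] using .inr (by group)
  · have hab : a * b ∈ closure {a * b, b * a} := subset_closure (by simp)
    simpa using mul_mem (mem_sup_right (inv_mem (mem_zpowers a))) (mem_sup_left hab)

theorem mul_conj_eq_and_conj_mul_eq (ha : a ^ 2 = 1) (hb : b ^ 3 = 1) (hab : (a * b) ^ 3 = 1) :
    a * (b * a * b⁻¹) = b⁻¹ * a * b ∧ b * a * b⁻¹ * a = b⁻¹ * a * b := by
  have ha' : a⁻¹ = a := inv_eq_of_mul_eq_one_left (by rwa [← sq])
  have hb' : b⁻¹ = b * b := inv_eq_of_mul_eq_one_left (by rwa [← sq, ← pow_succ])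
  have hbab : b * a * b = a * b⁻¹ * a := by
    calc b * a * b = a⁻¹ * (a * b) ^ 3 * (b⁻¹ * a⁻¹) := by simp [pow_three, mul_assoc]
      _ = a * b⁻¹ * a := by rw [hab, ha', mul_one, mul_assoc]
  constructor
  · calc a * (b * a * b⁻¹) = a * (b * a * b) * b := by rw [hb']; group
      _ = a * a * b⁻¹ * a * b := by rw [hbab]; group
      _ = b⁻¹ * a * b := by rw [← sq, ha, one_mul]
  · calc b * a * b⁻¹ * a = b * (a * b⁻¹ * a) := by group
      _ = b * b * a * b := by rw [← hbab]; group
      _ = b⁻¹ * a * b := by rw [hb']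

theorem isSolvable_of_sq_eq_one_of_cube_eq_one (hgen : closure {a, b} = ⊤) (ha : a ^ 2 = 1)
    (hb : b ^ 3 = 1) (hab : (a * b) ^ 3 = 1) : Group.IsSolvable G := by
  obtain ⟨hl, hr⟩ := mul_conj_eq_and_conj_mul_eq ha hb hab
  have hbb : b⁻¹ = b * b := inv_eq_of_mul_eq_one_left (by rwa [← sq, ← pow_succ])
  rw [Set.pair_comm] at hgen
  -- `{1, a, c, a * c}` is a Klein four-group whose involutions are permuted cyclically by `b`.
  set c := b * a * b⁻¹ with hc
  have hac : Commute a c := hl.trans hr.symm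
  have hbc : b * c * b⁻¹ = a * c := by
    calc b * c * b⁻¹ = b * b * a * (b * b)⁻¹ := by rw [hc]; group
      _ = a * c := by rw [← hbb, inv_inv, hl]
  have hbac : b * (a * c) * b⁻¹ = a := by rw [hl]; group
  have hcomm : ∀ s ∈ ({a, c, a * c} : Set G), ∀ t ∈ ({a, c, a * c} : Set G), Commute s t := by
    simp [hac, hac.symm]
  refine isSolvable_of_commute_of_conj_mem (T := {a, c, a * c}) hgen hcomm ?_ ?_ ?_
  · simp only [Set.mem_insert_iff, Set.mem_singleton_iff, forall_eq_or_imp, forall_eq]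
    exact ⟨.inr (.inl rfl), .inr (.inr hbc), .inl hbac⟩
  · exact fun t ht => by rwa [(hcomm a (by simp) t ht).mul_inv_cancel]
  · exact mem_sup_left (subset_closure (by simp))

end Solvable

open Matrix

section TwoByTwo

variable {R : Type*} [CommRing R]

theorem semiconjBy_lie_adjugate (M N : Matrix (Fin 2) (Fin 2) R) :
    SemiconjBy ⁅M, N⁆ M.adjugate M := by
  rw [Ring.lie_def, adjugate_fin_two, SemiconjBy]
  ext i j
  fin_cases i <;> fin_cases j <;> simp [Matrix.mul_apply, Fin.sum_univ_two] <;> ring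

theorem adjugate_eq_trace_smul_one_sub_s14 (M : Matrix (Fin 2) (Fin 2) R) :
    M.adjugate = M.trace • 1 - M := by
  rw [adjugate_fin_two, trace_fin_two]
  ext i j
  fin_cases i <;> fin_cases j <;> simp

theorem det_lie_eq (A B : SL(2, R)) :
    det ⁅A.1, B.1⁆ = 4 + A.1.trace * B.1.trace * (A * B).1.trace
      - A.1.trace ^ 2 - B.1.trace ^ 2 - (A * B).1.trace ^ 2 := by
  have hA := A.2
  have hB := B.2
  rw [det_fin_two] at hA hB
  simp only [Ring.lie_def, Matrix.SpecialLinearGroup.coe_mul, det_fin_two, trace_fin_two,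
    Matrix.sub_apply, Matrix.mul_apply, Fin.sum_univ_two]
  grind

theorem sq_eq_trace_smul_sub_one (A : SL(2, R)) : A.1 ^ 2 = A.1.trace • A.1 - 1 := by
  have h : A.1 * (A.1.trace • 1 - A.1) = 1 := by
    rw [← adjugate_eq_trace_smul_one_sub_s14, mul_adjugate, A.2, one_smul]
  rw [← h, mul_sub, mul_smul_comm, mul_one, sub_sub_cancel, sq]

theorem trace_inv_mul (A B : SL(2, R)) :
    (A⁻¹ * B).1.trace = A.1.trace * B.1.trace - (A * B).1.trace := by
  simp [adjugate_eq_trace_smul_one_sub_s14, sub_mul]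

theorem sub_one_sq_of_trace_eq_two {A : SL(2, R)} (hA : A.1.trace = 2) : (A.1 - 1) ^ 2 = 0 := by
  calc (A.1 - 1) ^ 2 = A.1 ^ 2 - 2 * A.1 + 1 := by noncomm_ring
    _ = 0 := by rw [sq_eq_trace_smul_sub_one, hA, two_smul, two_mul]; abel

theorem pow_eq_one_add_nsmul_sub_one {S : Type*} [Ring S] {a : S} (ha : (a - 1) ^ 2 = 0) (n : ℕ) :
    a ^ n = 1 + n • (a - 1) := by
  induction n with
  | zero => simp
  | succ n ih =>
    have haa : (a - 1) * a = a - 1 := by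
      rw [← sub_eq_zero, ← mul_sub_one, ← sq, ha]
    rw [pow_succ, ih, add_mul, one_mul, smul_mul_assoc, haa, succ_nsmul]
    abel

theorem pow_eq_one_of_trace_eq_two {p : ℕ} [CharP R p] {A : SL(2, R)} (hA : A.1.trace = 2) :
    A ^ p = 1 := by
  apply Subtype.ext
  rw [Matrix.SpecialLinearGroup.coe_pow,
    pow_eq_one_add_nsmul_sub_one (sub_one_sq_of_trace_eq_two hA)]
  simp [← Nat.cast_smul_eq_nsmul R]

theorem trace_pow_mul_of_trace_eq_two {A : SL(2, R)} (hA : A.1.trace = 2) (B : SL(2, R)) (n : ℕ) :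
    (A ^ n * B).1.trace = B.1.trace + n * ((A * B).1.trace - B.1.trace) := by
  rw [Matrix.SpecialLinearGroup.coe_mul, Matrix.SpecialLinearGroup.coe_pow,
    pow_eq_one_add_nsmul_sub_one (sub_one_sq_of_trace_eq_two hA), ← Nat.cast_smul_eq_nsmul R]
  simp [add_mul, sub_mul]

end TwoByTwo

section CenterQuotient

theorem eq_top_of_le_of_mem {G : Type*} [Group G] {N S : Subgroup G} [N.Normal] {a b : G}
    (hgen : closure {(a : G ⧸ N), (b : G ⧸ N)} = ⊤) (hN : N ≤ S) (ha : a ∈ S) (hb : b ∈ S) :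
    S = ⊤ := by
  have hmap : S.map (QuotientGroup.mk' N) = ⊤ := by
    rw [eq_top_iff, ← hgen, closure_le]
    exact Set.insert_subset (mem_map_of_mem _ ha)
      (Set.singleton_subset_iff.2 (mem_map_of_mem _ hb))
  calc S = comap _ (S.map _) := (comap_map_eq_self (by rwa [QuotientGroup.ker_mk' N])).symm
    _ = ⊤ := by rw [hmap, comap_top]

variable {n R : Type*} [Fintype n] [DecidableEq n] [CommRing R]

theorem coe_eq_one_of_eq_smul_one {A : Matrix.SpecialLinearGroup n R} {r : R} (h : A.1 = r • 1) :
    (A : ProjectiveSpecialLinearGroup n R) = 1 := by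
  rw [QuotientGroup.eq_one_iff, Matrix.SpecialLinearGroup.mem_center_iff]
  exact ⟨r, by simpa [h] using A.2, by rw [h, smul_one_eq_diagonal]; rfl⟩

/-- The matrices of `SL(n, R)` that map the column space of `W` into itself, encoded by the
existence of a matrix `h` of `SL(n, R)` that induces the same operation on the columns of `W`. -/
def columnSpaceStabilizer (W : Matrix n n R) : Subgroup (Matrix.SpecialLinearGroup n R) where
  carrier := {g | ∃ h : Matrix.SpecialLinearGroup n R, SemiconjBy W h.1 g.1}
  one_mem' := ⟨1, SemiconjBy.one_right W⟩
  mul_mem' := by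
    rintro g g' ⟨h, hg⟩ ⟨h', hg'⟩
    exact ⟨h * h', hg.mul_right hg'⟩
  inv_mem' := by
    rintro g ⟨h, hg⟩
    exact ⟨h⁻¹, SemiconjBy.units_inv_right (x := h.toGL) (y := g.toGL) hg⟩

theorem center_le_columnSpaceStabilizer (W : Matrix n n R) :
    center (Matrix.SpecialLinearGroup n R) ≤ columnSpaceStabilizer W := by
  intro g hg
  obtain ⟨r, -, hr⟩ := Matrix.SpecialLinearGroup.mem_center_iff.1 hg
  exact ⟨g, hr ▸ (scalar_commute r (Commute.all r) W).symm⟩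

end CenterQuotient

section TraceOrder

variable {R : Type*} [CommRing R] {A : SL(2, R)}

theorem coe_neg_eq (A : SL(2, R)) : ((-A : SL(2, R)) : PSL(2, R)) = A := by
  have h : ((-1 : SL(2, R)) : PSL(2, R)) = 1 := coe_eq_one_of_eq_smul_one (r := -1) (by simp)
  rw [← neg_one_mul, QuotientGroup.mk_mul, h, one_mul]

theorem coe_sq_eq_one_of_trace_eq_zero (hA : A.1.trace = 0) : (A : PSL(2, R)) ^ 2 = 1 :=
  coe_eq_one_of_eq_smul_one (A := A ^ 2) (r := -1) <| by
    simp [sq_eq_trace_smul_sub_one, hA]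

theorem coe_cube_eq_one_of_trace_sq_eq_one (hA : A.1.trace ^ 2 = 1) : (A : PSL(2, R)) ^ 3 = 1 :=
  coe_eq_one_of_eq_smul_one (A := A ^ 3) (r := -A.1.trace) <| by
    rw [Matrix.SpecialLinearGroup.coe_pow, pow_succ, sq_eq_trace_smul_sub_one, sub_mul,
      smul_mul_assoc, ← sq, sq_eq_trace_smul_sub_one, smul_sub, smul_smul, ← sq, hA]
    simp

end TraceOrder

section GeneratingPair

variable {F : Type*} [Field F] {A B : SL(2, F)}

theorem eq_zero_of_columnSpaceStabilizer_eq_top {W : Matrix (Fin 2) (Fin 2) F} (hdet : W.det = 0)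
    (hW : columnSpaceStabilizer W = ⊤) : W = 0 := by
  obtain ⟨w, hw, hwW⟩ := exists_vecMul_eq_zero_iff.2 hdet
  have key (g : SL(2, F)) : w ᵥ* g.1 ᵥ* W = 0 := by
    obtain ⟨h, hgh⟩ : g ∈ columnSpaceStabilizer W := hW ▸ mem_top g
    rw [vecMul_vecMul, ← hgh, ← vecMul_vecMul, hwW, zero_vecMul]
  have hw' : w 0 ≠ 0 ∨ w 1 ≠ 0 := by
    contrapose! hw
    exact funext (Fin.forall_fin_two.2 hw)
  have hrows (j : Fin 2) : W 0 j = 0 ∧ W 1 j = 0 := by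
    have h : w 0 * W 0 j + w 1 * W 1 j = 0 := by
      simpa [vecMul_eq_sum] using congrFun hwW j
    have hupper : w 0 * W 0 j + (w 0 + w 1) * W 1 j = 0 := by
      simpa [vecMul_eq_sum] using congrFun (key ⟨!![1, 1; 0, 1], by simp⟩) j
    have hlower : (w 0 + w 1) * W 0 j + w 1 * W 1 j = 0 := by
      simpa [vecMul_eq_sum] using congrFun (key ⟨!![1, 0; 1, 1], by simp⟩) j
    grind
  exact Matrix.ext (Fin.forall_fin_two.2 ⟨fun j => (hrows j).1, fun j => (hrows j).2⟩)

theorem lie_ne_zero (hgen : closure {(A : PSL(2, F)), (B : PSL(2, F))} = ⊤) :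
    ⁅A.1, B.1⁆ ≠ 0 := by
  intro hlie
  have hAB : A * B = B * A := Subtype.ext (sub_eq_zero.1 hlie)
  have htop : centralizer {A, B} = ⊤ :=
    eq_top_of_le_of_mem hgen (center_le_centralizer _)
      (by simp [mem_centralizer_iff, hAB]) (by simp [mem_centralizer_iff, hAB])
  have hcenter : center SL(2, F) = ⊤ := by
    rw [centralizer_eq_top_iff_subset] at htop
    exact eq_top_of_le_of_mem hgen le_rfl (htop (by simp)) (htop (by simp))
  have hmem : Matrix.SpecialLinearGroup.transvection zero_ne_one 1 ∈ center SL(2, F) :=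
    hcenter ▸ mem_top _
  exact one_ne_zero ((Matrix.SpecialLinearGroup.transvection_mem_center_iff _ _).1 hmem)

theorem det_lie_ne_zero (hgen : closure {(A : PSL(2, F)), (B : PSL(2, F))} = ⊤) :
    det ⁅A.1, B.1⁆ ≠ 0 := by
  intro hdet
  have hA : A ∈ columnSpaceStabilizer ⁅A.1, B.1⁆ :=
    ⟨A⁻¹, semiconjBy_lie_adjugate A.1 B.1⟩
  have hB : B ∈ columnSpaceStabilizer (A.1 * B.1 - B.1 * A.1) :=
    ⟨B⁻¹, neg_sub (B.1 * A.1) _ ▸ (semiconjBy_lie_adjugate B.1 A.1).neg_left⟩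
  exact lie_ne_zero hgen <| eq_zero_of_columnSpaceStabilizer_eq_top hdet <|
    eq_top_of_le_of_mem hgen (center_le_columnSpaceStabilizer _) hA hB

theorem trace_mul_ne_of_trace_eq_two (hgen : closure {(A : PSL(2, F)), (B : PSL(2, F))} = ⊤)
    (hA : A.1.trace = 2) : (A * B).1.trace ≠ B.1.trace := by
  intro h
  refine det_lie_ne_zero hgen ?_
  rw [det_lie_eq, hA, h]
  ring

end GeneratingPair

section PSLTwoFive

theorem not_isSolvable_PSL_of_sq_ne_one {F : Type*} [Field F]
    (hF : ∃ a : F, a ≠ 0 ∧ a ^ 2 ≠ 1) : ¬ Group.IsSolvable PSL(2, F) :=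
  have : Group.IsPerfect PSL(2, F) := ⟨SL2Simple.PSL_commutator_eq_top hF⟩
  Group.IsPerfect.not_isSolvable _

theorem not_isSolvable_PSL_zmod_five : ¬ Group.IsSolvable PSL(2, ZMod 5) :=
  not_isSolvable_PSL_of_sq_ne_one ⟨2, by decide⟩

theorem generatingPairLifts_of_trace_sq_eq_four {p : ℕ} [Fact p.Prime] {A : SL(2, ZMod p)}
    (hA : A.1.trace ^ 2 = 4) (B : SL(2, ZMod p)) :
    GeneratingPairLifts (Monoid.Coprod (Cyc 2) (Cyc p))
      (A : PSL(2, ZMod p)) (B : PSL(2, ZMod p)) := by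
  wlog htr : A.1.trace = 2 generalizing A
  · have hneg : A.1.trace = -2 := by
      refine (sq_eq_sq_iff_eq_or_eq_neg.1 ?_).resolve_left htr
      rw [hA]
      norm_num
    rw [← coe_neg_eq A]
    exact this (by simpa using hA) (by simp [hneg])
  intro hgen
  have hne : (A * B).1.trace - B.1.trace ≠ 0 :=
    sub_ne_zero.2 (trace_mul_ne_of_trace_eq_two hgen htr)
  let n := (-B.1.trace / ((A * B).1.trace - B.1.trace)).val
  have hinv : (A ^ n * B).1.trace = 0 := by
    rw [trace_pow_mul_of_trace_eq_two htr, ZMod.natCast_zmod_val, div_mul_cancel₀ _ hne,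
      add_neg_cancel]
  have hpow : (A : PSL(2, ZMod p)) ^ p = 1 := by
    rw [← QuotientGroup.mk_pow, pow_eq_one_of_trace_eq_two htr, QuotientGroup.mk_one]
  refine GeneratingPairLifts.of_zpow_mul n (.symm ?_) hgen
  rw [zpow_natCast]
  exact generatingPairLifts_coprod (coe_sq_eq_one_of_trace_eq_zero hinv) hpow

theorem eq_zero_or_sq_eq_four_of_sq_ne_one {x : ZMod 5} (hx : x ^ 2 ≠ 1) : x = 0 ∨ x ^ 2 = 4 := by
  decide +revert

theorem sub_sq_ne_one_of_sq_eq_one {x y z : ZMod 5} (hx : x ^ 2 = 1) (hy : y ^ 2 = 1)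
    (hz : z ^ 2 = 1) : (x * y - z) ^ 2 ≠ 1 := by
  decide +revert

variable {A B : SL(2, ZMod 5)}

theorem generatingPairLifts_of_trace_eq_zero_of_trace_sq_ne_one (hA : A.1.trace = 0)
    (hB : B.1.trace ^ 2 ≠ 1) :
    GeneratingPairLifts (Monoid.Coprod (Cyc 2) (Cyc 5))
      (A : PSL(2, ZMod 5)) (B : PSL(2, ZMod 5)) := by
  rcases eq_zero_or_sq_eq_four_of_sq_ne_one hB with hB | hB
  · intro hgen
    exact absurd (isSolvable_of_sq_eq_one_of_sq_eq_one hgen (coe_sq_eq_one_of_trace_eq_zero hA)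
      (coe_sq_eq_one_of_trace_eq_zero hB)) not_isSolvable_PSL_zmod_five
  · exact (generatingPairLifts_of_trace_sq_eq_four hB A).symm

theorem generatingPairLifts_of_trace_eq_zero (hA : A.1.trace = 0) (B : SL(2, ZMod 5)) :
    GeneratingPairLifts (Monoid.Coprod (Cyc 2) (Cyc 5))
      (A : PSL(2, ZMod 5)) (B : PSL(2, ZMod 5)) := by
  by_cases hB : B.1.trace ^ 2 = 1
  · by_cases hAB : (A * B).1.trace ^ 2 = 1
    · intro hgen
      exact absurd (isSolvable_of_sq_eq_one_of_cube_eq_one hgen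
        (coe_sq_eq_one_of_trace_eq_zero hA) (coe_cube_eq_one_of_trace_sq_eq_one hB)
        (coe_cube_eq_one_of_trace_sq_eq_one hAB)) not_isSolvable_PSL_zmod_five
    · exact .of_mul (generatingPairLifts_of_trace_eq_zero_of_trace_sq_ne_one hA hAB)
  · exact generatingPairLifts_of_trace_eq_zero_of_trace_sq_ne_one hA hB

theorem generatingPairLifts_of_trace_sq_ne_one (hA : A.1.trace ^ 2 ≠ 1) (B : SL(2, ZMod 5)) :
    GeneratingPairLifts (Monoid.Coprod (Cyc 2) (Cyc 5))
      (A : PSL(2, ZMod 5)) (B : PSL(2, ZMod 5)) :=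
  (eq_zero_or_sq_eq_four_of_sq_ne_one hA).elim
    (generatingPairLifts_of_trace_eq_zero · B) (generatingPairLifts_of_trace_sq_eq_four · B)

end PSLTwoFive

/-- for `G = C_2 ∗ C_5` and `H = PSL(2,5)`, every generating pair of
`H` lifts to a generating pair of `G` along some homomorphism `G → H`. -/
theorem stmt14 (h1 h2 : PSL2 (ZMod 5)) (hgen : Subgroup.closure {h1, h2} = ⊤) :
    ∃ (θ : Monoid.Coprod (Cyc 2) (Cyc 5) →* PSL2 (ZMod 5))
      (g1 g2 : Monoid.Coprod (Cyc 2) (Cyc 5)),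
      Subgroup.closure {g1, g2} = ⊤ ∧ θ g1 = h1 ∧ θ g2 = h2 := by
  obtain ⟨A, rfl⟩ := QuotientGroup.mk_surjective h1
  obtain ⟨B, rfl⟩ := QuotientGroup.mk_surjective h2
  suffices h : GeneratingPairLifts (Monoid.Coprod (Cyc 2) (Cyc 5))
      (A : PSL(2, ZMod 5)) (B : PSL(2, ZMod 5)) from h hgen
  by_cases hA : A.1.trace ^ 2 = 1
  · by_cases hB : B.1.trace ^ 2 = 1
    · by_cases hAB : (A * B).1.trace ^ 2 = 1
      · have hdiv : (A⁻¹ * B).1.trace ^ 2 ≠ 1 := by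
          rw [trace_inv_mul]
          exact sub_sq_ne_one_of_sq_eq_one hA hB hAB
        exact .of_inv_mul (generatingPairLifts_of_trace_sq_ne_one hdiv A).symm
      · exact .of_mul (generatingPairLifts_of_trace_sq_ne_one hAB A).symm
    · exact (generatingPairLifts_of_trace_sq_ne_one hB A).symm
  · exact generatingPairLifts_of_trace_sq_ne_one hA B
end

section
/- Let G = C_2 ∗ C_2 (the infinite dihedral group) and let H be any homomorphic image of G (i.e. there exists a surjective group homomorphism G → H). Then for every generating pair (h1,h2) of H there exist a group homomorphism θ : G → H and a generating pair (g1,g2) of G with θ(g1) = h1 and θ(g2) = h2. -/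
/-!
Let `x` and `y` be the images in `H` of the two standard involutions of `C_2 ∗ C_2`. Outside the
cyclic subgroup generated by `x * y`, which has index at most two, every element of `H` squares
to `1`. Hence at least two of `h1`, `h2`, `h1 * h2` square to `1`: the only case needing another
argument is `H = ⟨x * y⟩`, where `H` is abelian and so all its elements square to `1`. By the
universal property, those two are the images of the standard involutions under a homomorphism
`C_2 ∗ C_2 → H`, and undoing the Nielsen move `(h1, h2) ↦ (h1, h1 * h2)` or
`(h1, h2) ↦ (h1 * h2, h2)` in `C_2 ∗ C_2` gives the required generating pair.
-/

section GeneratingPairs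

open Subgroup

variable {G : Type*} [Group G]

lemma closure_pair_eq_top_iff {a b : G} :
    closure {a, b} = ⊤ ↔ ∀ S : Subgroup G, a ∈ S → b ∈ S → S = ⊤ := by
  refine ⟨fun h S ha hb => top_le_iff.mp ?_, fun h => h _ (mem_closure_of_mem (by simp))
    (mem_closure_of_mem (by simp))⟩
  rw [← h, closure_le]
  exact Set.pair_subset ha hb

lemma closure_pair_inv_mul_eq_top {a b : G} (h : closure {a, b} = ⊤) :
    closure {a, a⁻¹ * b} = ⊤ := by
  rw [closure_pair_eq_top_iff] at h ⊢
  exact fun S ha hab => h S ha ((mul_mem_cancel_left (inv_mem ha)).mp hab)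

lemma closure_pair_mul_inv_eq_top {a b : G} (h : closure {a, b} = ⊤) :
    closure {a * b⁻¹, b} = ⊤ := by
  rw [closure_pair_eq_top_iff] at h ⊢
  exact fun S hab hb => h S ((mul_mem_cancel_right (inv_mem hb)).mp hab) hb

lemma closure_pair_map_eq_top_s15 {H : Type*} [Group H] {a b : G} (h : closure {a, b} = ⊤) {φ : G →* H}
    (hφ : Function.Surjective φ) : closure {φ a, φ b} = ⊤ := by
  rw [← Set.image_pair, ← MonoidHom.map_closure, h, map_top_of_surjective φ hφ]

end GeneratingPairs

section Involutions

open Subgroup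

variable {H : Type*} [Group H] {x y : H}

lemma mem_zpowers_or_mul_mem_zpowers_of_mem_closure (hx : x ^ 2 = 1) (hy : y ^ 2 = 1) {h : H}
    (hh : h ∈ closure {x, y}) : h ∈ zpowers (x * y) ∨ x * h ∈ zpowers (x * y) := by
  have hxx : x * x = 1 := by rw [← sq, hx]
  have hxi : x⁻¹ = x := inv_eq_of_mul_eq_one_left hxx
  have hyi : y⁻¹ = y := inv_eq_of_mul_eq_one_left (by rw [← sq, hy])
  have hr : x * y ∈ zpowers (x * y) := mem_zpowers _
  have mul_left : ∀ z ∈ ({x, y} : Set H), ∀ g : H,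
      (g ∈ zpowers (x * y) ∨ x * g ∈ zpowers (x * y)) →
        z * g ∈ zpowers (x * y) ∨ x * (z * g) ∈ zpowers (x * y) := by
    rintro z (rfl | rfl) g (hg | hg)
    · right; rwa [← mul_assoc, hxx, one_mul]
    · exact .inl hg
    · right; rw [← mul_assoc]; exact mul_mem hr hg
    · left
      have hzg : z * g = (x * z)⁻¹ * (x * g) := by
        rw [mul_inv_rev, hyi, hxi, mul_assoc, ← mul_assoc x, hxx, one_mul]
      rw [hzg]
      exact mul_mem (inv_mem hr) hg
  induction hh using closure_induction_left with
  | one => exact .inl (one_mem _)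
  | mul_left z hz g _ ih => exact mul_left z hz g ih
  | inv_mul_cancel z hz g _ ih =>
    have hzi : z⁻¹ = z := by rcases hz with rfl | rfl <;> assumption
    rw [hzi]
    exact mul_left z hz g ih

lemma semiconjBy_zpow_mul_inv_of_sq_eq_one (hx : x ^ 2 = 1) (hy : y ^ 2 = 1) (k : ℤ) :
    SemiconjBy x ((x * y) ^ k) ((x * y) ^ k)⁻¹ := by
  rw [← inv_zpow]
  refine SemiconjBy.zpow_right ?_ k
  rw [SemiconjBy, mul_inv_rev, inv_mul_cancel_right, ← mul_assoc, ← sq, hx, one_mul]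
  exact (inv_eq_of_mul_eq_one_left (by rw [← sq, hy])).symm

lemma sq_eq_one_of_notMem_zpowers_mul (hx : x ^ 2 = 1) (hy : y ^ 2 = 1) {h : H}
    (hh : h ∈ closure {x, y}) (hr : h ∉ zpowers (x * y)) : h ^ 2 = 1 := by
  obtain ⟨k, hk⟩ := mem_zpowers_iff.mp
    ((mem_zpowers_or_mul_mem_zpowers_of_mem_closure hx hy hh).resolve_left hr)
  have hxh : x * (x * h) = h := by rw [← mul_assoc, ← sq, hx, one_mul]
  have hconj : h = (x * h)⁻¹ * x := by
    rw [← hk, ← (semiconjBy_zpow_mul_inv_of_sq_eq_one hx hy k).eq, hk, hxh]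
  calc h ^ 2 = (x * h)⁻¹ * x * h := by rw [← hconj, sq]
    _ = 1 := by rw [mul_assoc, inv_mul_cancel]

lemma pow_eq_one_of_mem_zpowers_mul {n : ℕ} (hx : x ^ n = 1) (hy : y ^ n = 1)
    (hxy : Commute x y) {h : H} (hh : h ∈ zpowers (x * y)) : h ^ n = 1 := by
  obtain ⟨k, rfl⟩ := mem_zpowers_iff.mp hh
  rw [← zpow_natCast, zpow_comm, zpow_natCast, hxy.mul_pow, hx, hy, one_mul, one_zpow]

lemma two_sq_eq_one_of_closure_pair_eq_top (hx : x ^ 2 = 1) (hy : y ^ 2 = 1)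
    (hxy : closure {x, y} = ⊤) {h₁ h₂ : H} (hgen : closure {h₁, h₂} = ⊤) :
    h₁ ^ 2 = 1 ∧ h₂ ^ 2 = 1 ∨ h₁ ^ 2 = 1 ∧ (h₁ * h₂) ^ 2 = 1 ∨
      (h₁ * h₂) ^ 2 = 1 ∧ h₂ ^ 2 = 1 := by
  have hout : ∀ h ∉ zpowers (x * y), h ^ 2 = 1 := fun h =>
    sq_eq_one_of_notMem_zpowers_mul hx hy (hxy ▸ mem_top h)
  by_cases mem₁ : h₁ ∈ zpowers (x * y) <;> by_cases mem₂ : h₂ ∈ zpowers (x * y)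
  · have htop : ∀ h : H, h ∈ zpowers (x * y) :=
      (eq_top_iff' _).mp (closure_pair_eq_top_iff.mp hgen _ mem₁ mem₂)
    have hcomm : Commute x y := setLike_mul_comm (htop x) (htop y)
    exact .inl ⟨pow_eq_one_of_mem_zpowers_mul hx hy hcomm mem₁,
      pow_eq_one_of_mem_zpowers_mul hx hy hcomm mem₂⟩
  · exact .inr (.inr ⟨hout _ (by rwa [mul_mem_cancel_left mem₁]), hout _ mem₂⟩)
  · exact .inr (.inl ⟨hout _ mem₁, hout _ (by rwa [mul_mem_cancel_right mem₂])⟩)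
  · exact .inl ⟨hout _ mem₁, hout _ mem₂⟩

end Involutions

section Coprod

open Monoid.Coprod Subgroup

variable {M N : Type*} [Group M] [Group N] {a : M} {b : N}

lemma closure_inl_inr_eq_top (ha : ∀ z, z ∈ zpowers a) (hb : ∀ z, z ∈ zpowers b) :
    closure {(inl a : Monoid.Coprod M N), inr b} = ⊤ := by
  rw [Set.insert_eq, Subgroup.closure_union, ← zpowers_eq_closure, ← zpowers_eq_closure,
    ← MonoidHom.map_zpowers, ← MonoidHom.map_zpowers, (eq_top_iff' _).mpr ha,
    (eq_top_iff' _).mpr hb, ← MonoidHom.range_eq_map, ← MonoidHom.range_eq_map,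
    range_inl_sup_range_inr]

lemma exists_coprod_hom_apply_eq {H : Type*} [Group H] (ha : ∀ z, z ∈ zpowers a)
    (hb : ∀ z, z ∈ zpowers b) {x y : H} (hx : orderOf x ∣ orderOf a)
    (hy : orderOf y ∣ orderOf b) :
    ∃ θ : Monoid.Coprod M N →* H, θ (inl a) = x ∧ θ (inr b) = y :=
  ⟨lift (monoidHomOfForallMemZpowers ha hx) (monoidHomOfForallMemZpowers hb hy), by simp, by simp⟩

end Coprod

namespace Cyc

open Subgroup

/-- The standard generator of the cyclic group of order `m`, the class of `1` modulo `m` written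
multiplicatively. -/
def gen (m : ℕ) : Cyc m := Multiplicative.ofAdd 1

lemma mem_zpowers_gen {m : ℕ} (z : Cyc m) : z ∈ zpowers (gen m) :=
  mem_zpowers_iff.mpr ⟨z.toAdd.cast, by simp [gen, ← ofAdd_zsmul]⟩

lemma orderOf_gen (m : ℕ) : orderOf (gen m) = m := by
  rw [gen, orderOf_ofAdd_eq_addOrderOf, ZMod.addOrderOf_one]

lemma gen_pow_self (m : ℕ) : gen m ^ m = 1 :=
  orderOf_dvd_iff_pow_eq_one.mp (orderOf_gen m).dvd

lemma exists_coprod_hom_apply_gen_eq {m n : ℕ} {H : Type*} [Group H] {x y : H} (hx : x ^ m = 1)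
    (hy : y ^ n = 1) :
    ∃ θ : Monoid.Coprod (Cyc m) (Cyc n) →* H,
      θ (.inl (gen m)) = x ∧ θ (.inr (gen n)) = y :=
  exists_coprod_hom_apply_eq mem_zpowers_gen mem_zpowers_gen
    (by rw [orderOf_gen]; exact orderOf_dvd_of_pow_eq_one hx)
    (by rw [orderOf_gen]; exact orderOf_dvd_of_pow_eq_one hy)

end Cyc

/-- for `G = C_2 ∗ C_2` (the infinite dihedral group) and any
homomorphic image `H` of `G`, every generating pair of `H` lifts to a generating
pair of `G` along some homomorphism `G → H`. -/
theorem stmt15 (H : Type) [Group H]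
    (hH : ∃ φ : Monoid.Coprod (Cyc 2) (Cyc 2) →* H, Function.Surjective φ)
    (h1 h2 : H) (hgen : Subgroup.closure {h1, h2} = ⊤) :
    ∃ (θ : Monoid.Coprod (Cyc 2) (Cyc 2) →* H)
      (g1 g2 : Monoid.Coprod (Cyc 2) (Cyc 2)),
      Subgroup.closure {g1, g2} = ⊤ ∧ θ g1 = h1 ∧ θ g2 = h2 := by
  obtain ⟨φ, hφ⟩ := hH
  let a : Monoid.Coprod (Cyc 2) (Cyc 2) := .inl (Cyc.gen 2)
  let b : Monoid.Coprod (Cyc 2) (Cyc 2) := .inr (Cyc.gen 2)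
  have hab : Subgroup.closure {a, b} = ⊤ :=
    closure_inl_inr_eq_top Cyc.mem_zpowers_gen Cyc.mem_zpowers_gen
  have ha : φ a ^ 2 = 1 := by simp only [a, ← map_pow, Cyc.gen_pow_self, map_one]
  have hb : φ b ^ 2 = 1 := by simp only [b, ← map_pow, Cyc.gen_pow_self, map_one]
  rcases two_sq_eq_one_of_closure_pair_eq_top ha hb (closure_pair_map_eq_top_s15 hab hφ) hgen with
    ⟨sq₁, sq₂⟩ | ⟨sq₁, sq₁₂⟩ | ⟨sq₁₂, sq₂⟩
  · obtain ⟨θ, hθa, hθb⟩ := Cyc.exists_coprod_hom_apply_gen_eq sq₁ sq₂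
    exact ⟨θ, a, b, hab, hθa, hθb⟩
  · obtain ⟨θ, hθa, hθb⟩ := Cyc.exists_coprod_hom_apply_gen_eq sq₁ sq₁₂
    exact ⟨θ, a, a⁻¹ * b, closure_pair_inv_mul_eq_top hab, hθa, by simp [a, b, hθa, hθb]⟩
  · obtain ⟨θ, hθa, hθb⟩ := Cyc.exists_coprod_hom_apply_gen_eq sq₁₂ sq₂
    exact ⟨θ, a * b⁻¹, b, closure_pair_mul_inv_eq_top hab, by simp [a, b, hθa, hθb], hθb⟩
end

section
/- Let m, n be positive integers and G = C_m ∗ C_n, and let G' denote the derived subgroup of G. Then the abelianization of G' (i.e. G'/[G',G']) is a free abelian group of rank (m−1)(n−1); in particular it is isomorphic to ℤ^{(m−1)(n−1)}. -/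
/-!
For arbitrary groups `A` and `B`, the kernel of `A ∗ B → A × B` is free on the commutators
`⁅a, b⁆` with `a ≠ 1` and `b ≠ 1`. They generate, because `A ∗ B = A · B · ⁅A, B⁆`. They satisfy no
relation, because an arbitrary choice of values for them in a group `F` extends to a homomorphism
on the kernel: conjugating the copy of `B` in the wreath product `F ≀ᵣ (A × B)` by a function
`A × B → F` yields a homomorphism on `A ∗ B`, and evaluating its function component at `1` on the
kernel reads off the chosen values. If `A` and `B` are commutative, the kernel is the derived
subgroup of `A ∗ B`, whose abelianization is thus free abelian on these commutators.
-/

open Monoid.Coprod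
open scoped Monoid.Coprod commutatorElement

/-- The index set of the free generators of the kernel of `A ∗ B → A × B`: pairs of nontrivial
elements. -/
abbrev NeOnePair (A B : Type*) [One A] [One B] : Type _ :=
  {a : A // a ≠ 1} × {b : B // b ≠ 1}

/-- The cartesian subgroup of the free product `A ∗ B`: the kernel of the canonical map to the
direct product. -/
def cartesianSubgroup (A B : Type*) [Group A] [Group B] : Subgroup (A ∗ B) :=
  (toProd : A ∗ B →* A × B).ker

section WreathProduct

variable {A B F : Type*} [Group A] [Group B] [Group F]

/-- The homomorphism from `A ∗ B` to the regular wreath product `F ≀ᵣ (A × B)` that is the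
inclusion on `A` and the conjugate of the inclusion by `p ↦ (f p⁻¹)⁻¹` on `B`. The inverses
make the formula `left_wreathHom_commutator` involve `f` at `a` and `b` themselves. -/
def wreathHom (f : A × B → F) : A ∗ B →* F ≀ᵣ (A × B) :=
  lift (RegularWreathProduct.inl.comp (MonoidHom.inl A B))
    ((MulAut.conj (⟨fun p ↦ (f p⁻¹)⁻¹, 1⟩ : F ≀ᵣ (A × B))).toMonoidHom.comp
      (RegularWreathProduct.inl.comp (MonoidHom.inr A B)))

theorem right_wreathHom (f : A × B → F) (g : A ∗ B) : (wreathHom f g).right = toProd g := by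
  have h : RegularWreathProduct.rightHom.comp (wreathHom f) = toProd := by
    ext <;> simp [wreathHom]
  exact DFunLike.congr_fun h g

theorem left_wreathHom_commutator (f : A × B → F) (a : A) (b : B) :
    (wreathHom f ⁅(inl a : A ∗ B), inr b⁆).left 1 =
      (f (a, 1))⁻¹ * f (a, b) * (f (1, b))⁻¹ * f (1, 1) := by
  simp [wreathHom, commutatorElement_def, mul_assoc]

end WreathProduct

namespace cartesianSubgroup

variable {A B F : Type*} [Group A] [Group B] [Group F]

theorem mem_iff {g : A ∗ B} : g ∈ cartesianSubgroup A B ↔ toProd g = 1 :=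
  MonoidHom.mem_ker

theorem commutator_mem (a : A) (b : B) : ⁅(inl a : A ∗ B), inr b⁆ ∈ cartesianSubgroup A B := by
  simp [mem_iff, commutatorElement_def]

theorem inv_inl_mul_inr_mul_mem_commutator (g : A ∗ B) :
    (inl (fst g) * inr (snd g))⁻¹ * g ∈
      ⁅(inl : A →* A ∗ B).range, (inr : B →* A ∗ B).range⁆ := by
  induction g using Monoid.Coprod.induction_on' with
  | one => simp
  | inl_mul c g ih => simpa [mul_assoc] using ih
  | inr_mul d g ih =>
    have commutator_mem_range (a : A) (b : B) :
        ⁅(inl a : A ∗ B), inr b⁆ ∈ ⁅(inl : A →* A ∗ B).range, (inr : B →* A ∗ B).range⁆ :=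
      Subgroup.commutator_mem_commutator ⟨a, rfl⟩ ⟨b, rfl⟩
    have split : (inl (fst (inr d * g)) * inr (snd (inr d * g)))⁻¹ * (inr d * g) =
        ⁅(inl (fst g)⁻¹ : A ∗ B), inr (d * snd g)⁻¹⁆⁻¹ *
          ⁅(inl (fst g)⁻¹ : A ∗ B), inr (snd g)⁻¹⁆ *
          ((inl (fst g) * inr (snd g))⁻¹ * g) := by
      simp only [commutatorElement_def, map_mul, map_inv, fst_apply_inr, snd_apply_inr, map_one]
      group
    rw [split]
    exact mul_mem (mul_mem (inv_mem (commutator_mem_range _ _)) (commutator_mem_range _ _)) ih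

theorem eq_commutator_range :
    cartesianSubgroup A B = ⁅(inl : A →* A ∗ B).range, (inr : B →* A ∗ B).range⁆ := by
  apply le_antisymm
  · intro g hg
    have hfst : fst g = 1 := by rw [← fst_toProd, mem_iff.mp hg, Prod.fst_one]
    have hsnd : snd g = 1 := by rw [← snd_toProd, mem_iff.mp hg, Prod.snd_one]
    simpa [hfst, hsnd] using inv_inl_mul_inr_mul_mem_commutator g
  · rw [Subgroup.commutator_le]
    rintro _ ⟨a, rfl⟩ _ ⟨b, rfl⟩
    exact commutator_mem a b

/-- The free generator of the cartesian subgroup indexed by a pair `(a, b)`: the commutator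
`⁅a, b⁆`. -/
def generator (s : NeOnePair A B) : cartesianSubgroup A B :=
  ⟨⁅inl s.1.1, inr s.2.1⁆, commutator_mem s.1.1 s.2.1⟩

theorem surjective_freeGroup_lift_generator :
    Function.Surjective (FreeGroup.lift (generator : NeOnePair A B → cartesianSubgroup A B)) := by
  have le_range : cartesianSubgroup A B ≤ (FreeGroup.lift generator).range.map
      (cartesianSubgroup A B).subtype := by
    conv_lhs => rw [eq_commutator_range]
    rw [Subgroup.commutator_le]
    rintro _ ⟨a, rfl⟩ _ ⟨b, rfl⟩
    by_cases ha : a = 1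
    · simp [ha]
    by_cases hb : b = 1
    · simp [hb]
    let s : NeOnePair A B := (⟨a, ha⟩, ⟨b, hb⟩)
    exact ⟨generator s, ⟨FreeGroup.of s, FreeGroup.lift_apply_of⟩, rfl⟩
  intro g
  obtain ⟨_, ⟨w, rfl⟩, hw⟩ := le_range g.2
  exact ⟨w, Subtype.ext hw⟩

/-- The extension of a family `f` of elements of `F` to a homomorphism on the cartesian subgroup
that maps `generator s` to `f s`. -/
noncomputable def liftHom (f : NeOnePair A B → F) : cartesianSubgroup A B →* F where
  toFun g :=
    (wreathHom (Function.extend (Prod.map Subtype.val Subtype.val) f 1) (g : A ∗ B)).left 1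
  map_one' := by simp
  map_mul' g h := by
    simp [right_wreathHom, mem_iff.mp g.2]

theorem liftHom_generator (f : NeOnePair A B → F) (s : NeOnePair A B) :
    liftHom f (generator s) = f s := by
  let fext : A × B → F := Function.extend (Prod.map Subtype.val Subtype.val) f 1
  have fext_coe : fext (s.1, s.2) = f s :=
    (Subtype.val_injective.prodMap Subtype.val_injective).extend_apply f 1 s
  have fext_left (a : A) : fext (a, 1) = 1 :=
    Function.extend_apply' _ _ _ fun ⟨t, ht⟩ ↦ t.2.2 (congrArg Prod.snd ht)
  have fext_right (b : B) : fext (1, b) = 1 :=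
    Function.extend_apply' _ _ _ fun ⟨t, ht⟩ ↦ t.1.2 (congrArg Prod.fst ht)
  calc liftHom f (generator s)
      = (fext (s.1, 1))⁻¹ * fext (s.1, s.2) * (fext (1, s.2))⁻¹ * fext (1, 1) :=
        left_wreathHom_commutator fext s.1 s.2
    _ = f s := by simp [fext_coe, fext_left, fext_right]

theorem injective_freeGroup_lift_generator :
    Function.Injective (FreeGroup.lift (generator : NeOnePair A B → cartesianSubgroup A B)) := by
  have left_inv : (liftHom FreeGroup.of).comp (FreeGroup.lift generator) =
      MonoidHom.id (FreeGroup (NeOnePair A B)) := by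
    ext s
    simp [liftHom_generator]
  exact Function.LeftInverse.injective (g := liftHom FreeGroup.of) (DFunLike.congr_fun left_inv)

/-- The isomorphism exhibiting the cartesian subgroup as a free group on the commutators of
nontrivial elements of the two factors. -/
noncomputable def freeGroupEquiv : FreeGroup (NeOnePair A B) ≃* cartesianSubgroup A B :=
  MulEquiv.ofBijective (FreeGroup.lift generator)
    ⟨injective_freeGroup_lift_generator, surjective_freeGroup_lift_generator⟩

end cartesianSubgroup

theorem commutator_coprod_eq_cartesianSubgroup {A B : Type*} [CommGroup A] [CommGroup B] :
    commutator (A ∗ B) = cartesianSubgroup A B := by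
  apply le_antisymm
  · exact Abelianization.commutator_subset_ker (toProd : A ∗ B →* A × B)
  · rw [cartesianSubgroup.eq_commutator_range]
    exact Subgroup.commutator_mono le_top le_top

/-- The abelianization of the free group on `S` is the free abelian group on `S`, in multiplicative
notation. -/
noncomputable def abelianizationFreeGroupEquiv (S : Type*) :
    Abelianization (FreeGroup S) ≃* Multiplicative (S →₀ ℤ) :=
  AddEquiv.toMultiplicativeRight (FreeAbelianGroup.equivFinsupp S)

theorem stmt17_general (A B : Type*) [CommGroup A] [CommGroup B] :
    Nonempty (Abelianization (commutator (A ∗ B)) ≃* Multiplicative (NeOnePair A B →₀ ℤ)) := by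
  rw [commutator_coprod_eq_cartesianSubgroup]
  exact ⟨cartesianSubgroup.freeGroupEquiv.symm.abelianizationCongr.trans
    (abelianizationFreeGroupEquiv _)⟩

theorem natCard_cyc_ne_one {m : ℕ} (hm : 0 < m) : Nat.card {a : Cyc m // a ≠ 1} = m - 1 := by
  have : NeZero m := ⟨hm.ne'⟩
  rw [Nat.card_eq_fintype_card, Fintype.card_subtype_compl, Fintype.card_subtype_eq,
    Fintype.card_multiplicative, ZMod.card]

theorem nonempty_neOnePair_cyc_equiv_fin {m n : ℕ} (hm : 0 < m) (hn : 0 < n) :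
    Nonempty (NeOnePair (Cyc m) (Cyc n) ≃ Fin ((m - 1) * (n - 1))) := by
  have : NeZero m := ⟨hm.ne'⟩
  have : NeZero n := ⟨hn.ne'⟩
  exact ⟨Finite.equivFinOfCardEq
    (by rw [Nat.card_prod, natCard_cyc_ne_one hm, natCard_cyc_ne_one hn])⟩

/-- for `G = C_m ∗ C_n`, the abelianization of the derived subgroup
`G'` of `G` is free abelian of rank `(m-1)(n-1)`, i.e. isomorphic to
`ℤ^((m-1)(n-1))`. -/
theorem stmt17 (m n : ℕ) (hm : 0 < m) (hn : 0 < n) :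
    Nonempty (Abelianization (commutator (Monoid.Coprod (Cyc m) (Cyc n))) ≃*
      Multiplicative (Fin ((m - 1) * (n - 1)) → ℤ)) := by
  obtain ⟨e⟩ := nonempty_neOnePair_cyc_equiv_fin hm hn
  exact (stmt17_general (Cyc m) (Cyc n)).map fun φ ↦ φ.trans (AddEquiv.toMultiplicative
    ((Finsupp.domCongr e).trans (Finsupp.linearEquivFunOnFinite ℤ ℤ _).toAddEquiv))
end
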